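/- Let (λ,μ) and (ϑ,ω) be bipartitions of n. The following assertions are equivalent: (1) (ϑ,ω) ⊴ (λ,μ) in the bidominance order; (2) I_{(ϑ,ω)} ⊆ I_{(λ,μ)} as ideals of K[x₁,…,x_n]; (3) V_{(λ,μ)} ⊆ V_{(ϑ,ω)} as subsets of K^n. -/

import Mathlib

/-!
Both components of a bipartition `(λ, μ)` are read together as the interleaved sequence
`λ₁, μ₁, λ₂, μ₂, …`; bidominance is the comparison of all partial sums of these sequences
(`bidomFun_iff`).

*Dominance implies inclusion of ideals.* Up to sign the Specht polynomial of a bitableau depends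
only on the distribution of the entries among the columns, so bitableaux are replaced by column
colourings `χ` with polynomial `colPoly x χ`, a product of Vandermonde products in the squares of
the variables, one for each column, and of the variables in the right columns
(`Bitableau.exists_matches`, `exists_bitableau_of_hasShape`, `Bitableau.Matches.associated`). The
inclusion is obtained by moving boxes between two columns. Let the columns have entry sets `A` and
`B`, let `k` boxes move from `A` to `B`, and put `s = |A| - k`. In the matrix with columns
`1, Y, …, Y^(s-1), g, gY, …, gY^(k-1)` evaluated at the `x_i²`, `i ∈ A`, where `g` is monic of
degree `s`, the determinant is the Vandermonde determinant of `A`. A positive integer multiple of it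
is the antisymmetrization over `A` of the product of two Vandermonde determinants of sizes `s` and
`k` and the values of `g` (`exists_exchange`). With `g = Y^(s-|B|) ∏_{b ∈ B} (Y - x_b²)` every term
is divisible by the Specht polynomial of the bitableau in which `k` entries of `A` have been moved
to `B`; the power of `Y` supplies the extra variables when boxes move from left to right
(`colPoly_mem_of_recolor`). A greedy choice of the moves leads from any dominated shape to the
dominating one: either a single box is moved, or `k` boxes are exchanged between a left and a right
column (`exists_move`, `colPoly_mem_of_dominated`).

*Inclusion of ideals implies inclusion of varieties*, trivially.

*Inclusion of varieties implies dominance.* Suppose that the `m`-th partial sum for the shape of `q`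
exceeds the one for `p`. Fill a bitableau of the shape of `q` so that the entries in the first `m`
interleaved rows get values depending only on the row, with value zero allowed only on the left,
and all others get distinct values (`Bitableau.exists_values`). The Specht polynomial of this
bitableau does not vanish at the resulting point. For a bitableau of the shape of `p` nonvanishing
would force the row values to be distinct in each column and nonzero on the right, which bounds
the number of entries with such values by the `m`-th partial sum for `p`
(`card_cells_le_of_column_injective`); hence all Specht polynomials of the shape of `p` vanish there.
-/

namespace SpechtBn

/-- `f` lists the parts of a partition (0-indexed: part `j+1` of the paper is `f j`),
with at most `n` parts. -/
def IsPartitionFun (n : ℕ) (f : ℕ → ℕ) : Prop :=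
  Antitone f ∧ ∀ i, n ≤ i → f i = 0

/-- the pair of part functions `(f, g)` forms a bipartition of `n`. -/
def IsBP (n : ℕ) (f g : ℕ → ℕ) : Prop :=
  IsPartitionFun n f ∧ IsPartitionFun n g ∧ (∑ i ∈ Finset.range n, (f i + g i)) = n

/-- A bipartition of `n`, given by the 0-indexed part functions of its two components. -/
structure Bipartition (n : ℕ) where
  l : ℕ → ℕ
  m : ℕ → ℕ
  isBP : IsBP n l m

/-- Bidominance on pairs of part functions: `(l₁,m₁) ⊴ (l₂,m₂)`. -/
def BidomFun (l₁ m₁ l₂ m₂ : ℕ → ℕ) : Prop :=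
  (∀ k, ∑ j ∈ Finset.range k, (l₁ j + m₁ j) ≤ ∑ j ∈ Finset.range k, (l₂ j + m₂ j)) ∧
  (∀ k, (∑ j ∈ Finset.range k, (l₁ j + m₁ j)) + l₁ k
      ≤ (∑ j ∈ Finset.range k, (l₂ j + m₂ j)) + l₂ k)

/-- `Bidom q p` : the bipartition `q` is bidominated by `p`, i.e. `q ⊴ p`. -/
def Bidom {n : ℕ} (q p : Bipartition n) : Prop := BidomFun q.l q.m p.l p.m

/-- Dominance order on part functions: `DomFun f g` means `f ⊴ g`. -/
def DomFun (f g : ℕ → ℕ) : Prop :=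
  ∀ k, ∑ j ∈ Finset.range k, f j ≤ ∑ j ∈ Finset.range k, g j

/-- `g` covers `f` in the dominance order on partitions (of the same size, with ≤ `n` parts). -/
def DomCovers (n : ℕ) (g f : ℕ → ℕ) : Prop :=
  IsPartitionFun n g ∧ IsPartitionFun n f ∧ DomFun f g ∧ f ≠ g ∧
  ∀ h : ℕ → ℕ, IsPartitionFun n h →
    (∑ j ∈ Finset.range n, h j) = (∑ j ∈ Finset.range n, f j) →
    DomFun f h → DomFun h g → h = f ∨ h = g

/-- `p` covers `q` in the bidominance order on bipartitions of `n`. -/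
def BPCovers {n : ℕ} (p q : Bipartition n) : Prop :=
  Bidom q p ∧ q ≠ p ∧ ∀ r : Bipartition n, Bidom q r → Bidom r p → r = q ∨ r = p

/-- number of positive parts of `f` (among the first `n`). -/
def lenF (n : ℕ) (f : ℕ → ℕ) : ℕ := ((Finset.range n).filter fun i => 1 ≤ f i).card

/-- the cells `(row, column)` of the Young diagram of `f` (0-indexed). -/
def cellsF (n : ℕ) (f : ℕ → ℕ) : Finset (ℕ × ℕ) :=
  (Finset.range n ×ˢ Finset.range n).filter fun c => c.2 < f c.1

/-- ordered pairs of cells lying in the same column, the first strictly above the second. -/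
def colPairs (n : ℕ) (f : ℕ → ℕ) : Finset ((ℕ × ℕ) × (ℕ × ℕ)) :=
  ((cellsF n f) ×ˢ (cellsF n f)).filter fun q => q.1.2 = q.2.2 ∧ q.1.1 < q.2.1

/-- A bitableau of shape `(f,g)`: a filling of the pair of Young diagrams with the
numbers `1,…,n` (here: the elements of `Fin n`), each used exactly once. -/
structure Bitableau (n : ℕ) (f g : ℕ → ℕ) where
  left : ℕ × ℕ → Fin n
  right : ℕ × ℕ → Fin n
  bij : ∀ k : Fin n, ∃! c : (ℕ × ℕ) ⊕ (ℕ × ℕ),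
      Sum.elim (fun c => c ∈ cellsF n f ∧ left c = k)
               (fun c => c ∈ cellsF n g ∧ right c = k) c

/-- A tableau of shape `f`: a filling of the Young diagram of `f` with the elements
of `Fin n`, each used exactly once. -/
structure Tableau (n : ℕ) (f : ℕ → ℕ) where
  entry : ℕ × ℕ → Fin n
  bij : ∀ k : Fin n, ∃! c : ℕ × ℕ, c ∈ cellsF n f ∧ entry c = k

open MvPolynomial in
/-- The `B_n`-Specht polynomial of a bitableau. -/
noncomputable def speB (n : ℕ) (K : Type*) [CommRing K] {f g : ℕ → ℕ}
    (bt : Bitableau n f g) : MvPolynomial (Fin n) K :=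
  (∏ q ∈ colPairs n f, (X (bt.left q.1) ^ 2 - X (bt.left q.2) ^ 2)) *
  (∏ q ∈ colPairs n g, (X (bt.right q.1) ^ 2 - X (bt.right q.2) ^ 2)) *
  ∏ c ∈ cellsF n g, X (bt.right c)

open MvPolynomial in
/-- The `S_n`-Specht polynomial of a tableau. -/
noncomputable def speSn (n : ℕ) (K : Type*) [CommRing K] {f : ℕ → ℕ}
    (U : Tableau n f) : MvPolynomial (Fin n) K :=
  ∏ q ∈ colPairs n f, (X (U.entry q.1) - X (U.entry q.2))

/-- The set of all `B_n`-Specht polynomials of shape `(f,g)`. -/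
def spechtSet (n : ℕ) (K : Type*) [CommRing K] (f g : ℕ → ℕ) :
    Set (MvPolynomial (Fin n) K) :=
  {P | ∃ bt : Bitableau n f g, P = speB n K bt}

/-- The `B_n`-Specht ideal of shape `(f,g)`. -/
noncomputable def spechtIdeal (n : ℕ) (K : Type*) [CommRing K] (f g : ℕ → ℕ) :
    Ideal (MvPolynomial (Fin n) K) :=
  Ideal.span (spechtSet n K f g)

/-- The `B_n`-Specht variety of shape `(f,g)`. -/
def spechtVariety (n : ℕ) (K : Type*) [CommRing K] (f g : ℕ → ℕ) : Set (Fin n → K) :=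
  {z | ∀ P ∈ spechtIdeal n K f g, MvPolynomial.eval z P = 0}

/-- The `S_n`-orbit type of `z`: the multiplicities of the distinct values occurring among
the coordinates of `z`, sorted decreasingly (0-indexed part function). -/
noncomputable def snType {K : Type*} {n : ℕ} (z : Fin n → K) : ℕ → ℕ := fun j =>
  letI := Classical.decEq K
  (((Finset.univ.image z).val.map fun v =>
      (Finset.univ.filter fun i => z i = v).card).sort (· ≤ ·)).reverse.getD j 0

/-- The index `j-1` (0-indexed) used in the definition of the `t`-cut. -/
def cutIdx (n : ℕ) (f : ℕ → ℕ) (t : ℕ) : ℕ :=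
  ((Finset.range n).filter fun i => t ≤ f i ∧ 1 ≤ f i).card

/-- First component `ρ` of the `t`-cut of `f`. -/
def cutFst (n : ℕ) (f : ℕ → ℕ) (t : ℕ) : ℕ → ℕ :=
  fun i => if i < cutIdx n f t then t else f i

/-- Second component `σ` of the `t`-cut of `f`. -/
def cutSnd (n : ℕ) (f : ℕ → ℕ) (t : ℕ) : ℕ → ℕ :=
  fun i => if i < cutIdx n f t then f i - t else 0

/-- the number of zero coordinates of `z`. -/
noncomputable def zeroCount {K : Type*} [Zero K] {n : ℕ} (z : Fin n → K) : ℕ :=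
  letI := Classical.decEq K
  (Finset.univ.filter fun i => z i = 0).card

/-- First component of the `B_n`-orbit type `Ω(z) = cut(Λ(z²), t_z)`. -/
noncomputable def omegaFst {K : Type*} [CommRing K] {n : ℕ} (z : Fin n → K) : ℕ → ℕ :=
  cutFst n (snType fun i => z i ^ 2) (zeroCount z)

/-- Second component of the `B_n`-orbit type `Ω(z) = cut(Λ(z²), t_z)`. -/
noncomputable def omegaSnd {K : Type*} [CommRing K] {n : ℕ} (z : Fin n → K) : ℕ → ℕ :=
  cutSnd n (snType fun i => z i ^ 2) (zeroCount z)

/-- The `B_n`-orbit set `H_{(f,g)}`. -/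
def orbitSet (n : ℕ) (K : Type*) [CommRing K] (f g : ℕ → ℕ) : Set (Fin n → K) :=
  {z | omegaFst z = f ∧ omegaSnd z = g}

/-- `τ` is a vector of signs. -/
def IsSigns {n : ℕ} {K : Type*} [One K] [Neg K] (τ : Fin n → K) : Prop :=
  ∀ i, τ i = 1 ∨ τ i = -1

/-- The action of the element `(τ, ρ)` of the hyperoctahedral group `B_n` on polynomials,
sending `x_i` to `τ(ρ(i))·x_{ρ(i)}`. -/
noncomputable def bnAct (n : ℕ) (K : Type*) [CommRing K] (τ : Fin n → K)
    (ρ : Equiv.Perm (Fin n)) :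
    MvPolynomial (Fin n) K →ₐ[K] MvPolynomial (Fin n) K :=
  MvPolynomial.aeval fun i => MvPolynomial.C (τ (ρ i)) * MvPolynomial.X (ρ i)

/-- `I` is a `B_n`-invariant ideal. -/
def BnInvariantIdeal (n : ℕ) (K : Type*) [CommRing K]
    (I : Ideal (MvPolynomial (Fin n) K)) : Prop :=
  ∀ P ∈ I, ∀ τ : Fin n → K, IsSigns τ → ∀ ρ : Equiv.Perm (Fin n), bnAct n K τ ρ P ∈ I

/-- `P` is a `B_n`-invariant polynomial. -/
def BnInvariantPoly (n : ℕ) (K : Type*) [CommRing K] (P : MvPolynomial (Fin n) K) : Prop :=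
  ∀ τ : Fin n → K, IsSigns τ → ∀ ρ : Equiv.Perm (Fin n), bnAct n K τ ρ P = P

/-- the decreasing rearrangement of a multiset of naturals, as a 0-indexed part function. -/
def sortedDesc (M : Multiset ℕ) : ℕ → ℕ := fun j => ((M.sort (· ≤ ·)).reverse).getD j 0

/-- the conjugate (transpose) of the part function `f` (with at most `n` parts). -/
def conjF (n : ℕ) (f : ℕ → ℕ) : ℕ → ℕ :=
  fun c => ((Finset.range n).filter fun i => c < f i).card

/-- indices with positive even exponent in the monomial with exponent vector `e`. -/
def evenSupp {n : ℕ} (e : Fin n →₀ ℕ) : Finset (Fin n) :=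
  Finset.univ.filter fun i => e i ≠ 0 ∧ Even (e i)

/-- indices with odd exponent in the monomial with exponent vector `e`. -/
def oddSupp {n : ℕ} (e : Fin n →₀ ℕ) : Finset (Fin n) :=
  Finset.univ.filter fun i => Odd (e i)

/-- `d₁ = Σ_{i∈I₁} k_i` for the monomial with exponent vector `e`. -/
def d1F {n : ℕ} (e : Fin n →₀ ℕ) : ℕ := ∑ i ∈ evenSupp e, e i / 2

/-- `d₂ = Σ_{i∈I₂} r_i` for the monomial with exponent vector `e`. -/
def d2F {n : ℕ} (e : Fin n →₀ ℕ) : ℕ := ∑ i ∈ oddSupp e, e i / 2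

/-- first component of the bipartition `Γ(m)` of the monomial with exponent vector `e`:
`(λ₁+1,…,λ_ℓ+1, 1,…,1)` with `n−(ℓ+s+d₁+d₂)` trailing ones. -/
def gammaFst {n : ℕ} (e : Fin n →₀ ℕ) : ℕ → ℕ := fun j =>
  if j < n - ((oddSupp e).card + d1F e + d2F e) then
    max (sortedDesc ((evenSupp e).val.map fun i => e i / 2 + 1) j) 1
  else 0

/-- second component of the bipartition `Γ(m)`: `(μ₁+1,…,μ_s+1)`. -/
def gammaSnd {n : ℕ} (e : Fin n →₀ ℕ) : ℕ → ℕ :=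
  sortedDesc ((oddSupp e).val.map fun i => e i / 2 + 1)

/-- first component of `Γ*(m)`, the conjugate of the first component of `Γ(m)`. -/
def gammaStarFst {n : ℕ} (e : Fin n →₀ ℕ) : ℕ → ℕ := conjF n (gammaFst e)

/-- second component of `Γ*(m)`, the conjugate of the second component of `Γ(m)`. -/
def gammaStarSnd {n : ℕ} (e : Fin n →₀ ℕ) : ℕ → ℕ := conjF n (gammaSnd e)

/-- position, in the glued tableau, of column `j` of the left diagram: columns are sorted
by weakly decreasing height, left-diagram columns first among equal heights. -/
def gluePosL (n : ℕ) (f g : ℕ → ℕ) (j : ℕ) : ℕ :=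
  j + ((Finset.range n).filter fun k => conjF n f j < conjF n g k).card

/-- position, in the glued tableau, of column `k` of the right diagram. -/
def gluePosR (n : ℕ) (f g : ℕ → ℕ) (k : ℕ) : ℕ :=
  k + ((Finset.range n).filter fun j => conjF n g k ≤ conjF n f j).card

/-- `U` is the glueing `T ⊎ S` of the bitableau `(T,S)`. -/
def IsGlue {n : ℕ} {f g : ℕ → ℕ} (bt : Bitableau n f g)
    (U : Tableau n (fun i => f i + g i)) : Prop :=
  (∀ c ∈ cellsF n f, U.entry (c.1, gluePosL n f g c.2) = bt.left c) ∧
  (∀ c ∈ cellsF n g, U.entry (c.1, gluePosR n f g c.2) = bt.right c)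

/-- extension of a finitely-presented part function to `ℕ → ℕ`. -/
def extendF {n : ℕ} (h : Fin n → Fin (n + 1)) : ℕ → ℕ :=
  fun i => if hi : i < n then (h ⟨i, hi⟩ : ℕ) else 0

/-- `Σ_{(ϑ,ω)∈BP_n, (ϑ,ω) ⋬ (lam,mu)} s_{ϑ,ω}²`, where `s_{ϑ,ω}` is the dimension of the
span of the Specht polynomials of shape `(ϑ,ω)`. -/
noncomputable def sBound (n : ℕ) (K : Type*) [Field K] (lam mu : ℕ → ℕ) : ℕ :=
  letI : DecidablePred (fun q : (Fin n → Fin (n + 1)) × (Fin n → Fin (n + 1)) =>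
      IsBP n (extendF q.1) (extendF q.2) ∧
        ¬ BidomFun (extendF q.1) (extendF q.2) lam mu) :=
    Classical.decPred _
  ∑ q ∈ Finset.univ.filter (fun q : (Fin n → Fin (n + 1)) × (Fin n → Fin (n + 1)) =>
      IsBP n (extendF q.1) (extendF q.2) ∧
        ¬ BidomFun (extendF q.1) (extendF q.2) lam mu),
    (Module.finrank K (Submodule.span K (spechtSet n K (extendF q.1) (extendF q.2)))) ^ 2

end SpechtBn

namespace SpechtBn

/-! ### Products of differences over unordered pairs -/

/-- A product of antisymmetric factors over a set of ordered pairs depends, up to sign, only on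
the underlying set of unordered pairs. -/
theorem prod_pairs_associated {R ι : Type*} [CommRing R] [DecidableEq ι] (S S' : Finset (ι × ι))
    (d : ι → ι → R) (hd : ∀ a b, d b a = -d a b)
    (aS : ∀ p ∈ S, p.swap ∉ S) (aS' : ∀ p ∈ S', p.swap ∉ S')
    (h : ∀ p ∈ S, p ∈ S' ∨ p.swap ∈ S') (h' : ∀ p ∈ S', p ∈ S ∨ p.swap ∈ S) :
    Associated (∏ p ∈ S, d p.1 p.2) (∏ p ∈ S', d p.1 p.2) := by
  classical
  have key : ∀ a b, Associates.mk (d a b) = Associates.mk (d b a) := fun a b => by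
    rw [Associates.mk_eq_mk_iff_associated, hd a b]
    exact (Associated.refl _).neg_right
  let F : Sym2 ι → Associates R :=
    Sym2.lift ⟨fun a b => Associates.mk (d a b), fun a b => key a b⟩
  have inj : ∀ T : Finset (ι × ι), (∀ p ∈ T, p.swap ∉ T) →
      Associates.mk (∏ p ∈ T, d p.1 p.2) = ∏ e ∈ T.image (fun p => s(p.1, p.2)), F e := by
    intro T hT
    rw [Finset.prod_image, ← Associates.finsetProd_mk]
    · rfl
    · rintro ⟨a, b⟩ hp ⟨c, e⟩ hq hpq
      rcases Sym2.eq_iff.1 hpq with ⟨h1, h2⟩ | ⟨h1, h2⟩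
      · simp_all
      · simp only at h1 h2
        subst h1 h2
        exact absurd hq (hT _ hp)
  rw [← Associates.mk_eq_mk_iff_associated, inj S aS, inj S' aS']
  congr 1
  ext e
  simp only [Finset.mem_image]
  constructor
  · rintro ⟨p, hp, rfl⟩
    rcases h p hp with hq | hq
    · exact ⟨p, hq, rfl⟩
    · exact ⟨p.swap, hq, Sym2.eq_swap⟩
  · rintro ⟨p, hp, rfl⟩
    rcases h' p hp with hq | hq
    · exact ⟨p, hq, rfl⟩
    · exact ⟨p.swap, hq, Sym2.eq_swap⟩

/-- The Vandermonde product `∏_{i<j} (x_i² - x_j²)` over a set `A` of indices. -/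
def colDelta {R : Type*} [CommRing R] {n : ℕ} (x : Fin n → R) (A : Finset (Fin n)) : R :=
  ∏ p ∈ (A ×ˢ A).filter (fun p => p.1 < p.2), (x p.1 ^ 2 - x p.2 ^ 2)

theorem colDelta_union {R : Type*} [CommRing R] {n : ℕ} (x : Fin n → R) (A B : Finset (Fin n))
    (hAB : Disjoint A B) :
    Associated (colDelta x (A ∪ B))
      (colDelta x A * colDelta x B * ∏ i ∈ A, ∏ b ∈ B, (x i ^ 2 - x b ^ 2)) := by
  have hdis : ∀ i, i ∈ A → i ∉ B := fun _ h => Finset.disjoint_left.1 hAB h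
  have e : colDelta x A * colDelta x B * ∏ i ∈ A, ∏ b ∈ B, (x i ^ 2 - x b ^ 2) =
      ∏ p ∈ ((A ×ˢ A).filter (fun p => p.1 < p.2) ∪ (B ×ˢ B).filter (fun p => p.1 < p.2)) ∪
        A ×ˢ B, (x p.1 ^ 2 - x p.2 ^ 2) := by
    rw [Finset.prod_union, Finset.prod_union, Finset.prod_product]
    · rfl
    · rw [Finset.disjoint_left]; rintro ⟨i, j⟩; simp; grind
    · rw [Finset.disjoint_left]; rintro ⟨i, j⟩; simp; grind
  rw [e]
  refine prod_pairs_associated _ _ (fun a b => x a ^ 2 - x b ^ 2) (fun a b => by ring) ?_ ?_ ?_ ?_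
  · rintro ⟨i, j⟩; simp; grind
  · rintro ⟨i, j⟩; simp; grind
  · rintro ⟨i, j⟩; simp; grind
  · rintro ⟨i, j⟩; simp; grind

theorem vandermonde_associated_colDelta {R : Type*} [CommRing R] {n m : ℕ} (x : Fin n → R)
    (A : Finset (Fin n)) (w : Fin m → Fin n) (hw : Function.Injective w)
    (hA : ∀ i, i ∈ A ↔ ∃ j, w j = i) :
    Associated (Matrix.vandermonde fun j => x (w j) ^ 2).det (colDelta x A) := by
  have e : (Matrix.vandermonde fun j => x (w j) ^ 2).det =
      ∏ p ∈ ((Finset.univ : Finset (Fin m × Fin m)).filter (fun p => p.1 < p.2)).image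
        (fun p => (w p.2, w p.1)), (x p.1 ^ 2 - x p.2 ^ 2) := by
    rw [Matrix.det_vandermonde, Finset.prod_image]
    · rw [Finset.prod_filter, ← Finset.univ_product_univ, Finset.prod_product]
      refine Finset.prod_congr rfl fun i _ => ?_
      rw [← Finset.prod_filter]
      refine Finset.prod_congr ?_ fun _ _ => rfl
      ext; simp
    · rintro ⟨a, b⟩ _ ⟨c, d⟩ _ h
      simp only [Prod.mk.injEq] at h
      exact Prod.ext (hw h.2) (hw h.1)
  rw [e]
  refine prod_pairs_associated _ _ (fun a b => x a ^ 2 - x b ^ 2) (fun a b => by ring) ?_ ?_ ?_ ?_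
  · rintro ⟨i, j⟩
    simp only [Finset.mem_image, Finset.mem_filter, Finset.mem_univ, true_and, Prod.mk.injEq,
      Prod.exists, Prod.swap_prod_mk]
    rintro ⟨a, b, h1, h2, h3⟩ ⟨c, d, h4, h5, h6⟩
    have h7 := hw (h2.trans h6.symm)
    have h8 := hw (h3.trans h5.symm)
    subst h7 h8
    exact lt_asymm h1 h4
  · rintro ⟨i, j⟩; simp; grind
  · rintro ⟨i, j⟩
    simp only [Finset.mem_image, Finset.mem_filter, Finset.mem_univ, true_and, Prod.mk.injEq,
      Prod.exists, Prod.swap_prod_mk, Finset.mem_product]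
    rintro ⟨a, b, h1, rfl, rfl⟩
    have : w a ≠ w b := fun h => h1.ne (hw h)
    have ha := (hA (w a)).2 ⟨a, rfl⟩
    have hb := (hA (w b)).2 ⟨b, rfl⟩
    rcases lt_or_gt_of_ne this with h | h
    · exact Or.inr ⟨⟨ha, hb⟩, h⟩
    · exact Or.inl ⟨⟨hb, ha⟩, h⟩
  · rintro ⟨i, j⟩
    simp only [Finset.mem_image, Finset.mem_filter, Finset.mem_univ, true_and, Prod.mk.injEq,
      Prod.exists, Prod.swap_prod_mk, Finset.mem_product]
    rintro ⟨⟨hi, hj⟩, hij⟩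
    obtain ⟨a, rfl⟩ := (hA i).1 hi
    obtain ⟨b, rfl⟩ := (hA j).1 hj
    have : a ≠ b := fun h => hij.ne (by rw [h])
    rcases lt_or_gt_of_ne this with h | h
    · exact Or.inr ⟨a, b, h, rfl, rfl⟩
    · exact Or.inl ⟨b, a, h, rfl, rfl⟩

/-! ### An antisymmetrization identity -/

/-- Antisymmetrizing over the rows of `H` the determinant of the entrywise product of `H` with a
matrix `mask` gives `det H` times the permanent of `mask`. -/
theorem sum_sign_det_mask {R ι : Type*} [CommRing R] [Fintype ι] [DecidableEq ι]
    (mask H : Matrix ι ι R) :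
    ∑ σ : Equiv.Perm ι, ((Equiv.Perm.sign σ : ℤ) : R) *
        (Matrix.of fun i j => mask i j * H (σ i) j).det =
      (∑ τ : Equiv.Perm ι, ∏ i, mask (τ i) i) * H.det := by
  have inner : ∀ τ : Equiv.Perm ι, ∑ σ : Equiv.Perm ι, ((Equiv.Perm.sign σ : ℤ) : R) *
      (((Equiv.Perm.sign τ : ℤ) : R) * ∏ i, H (σ (τ i)) i) = H.det := by
    intro τ
    rw [Matrix.det_apply', eq_comm, ← Equiv.sum_comp (Equiv.mulRight τ)]
    refine Finset.sum_congr rfl fun σ _ => ?_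
    simp [mul_assoc]
  rw [Finset.sum_mul]
  simp only [Matrix.det_apply' (Matrix.of _), Matrix.of_apply, Finset.mul_sum]
  rw [Finset.sum_comm]
  refine Finset.sum_congr rfl fun τ _ => ?_
  rw [← inner τ, Finset.mul_sum]
  refine Finset.sum_congr rfl fun σ _ => ?_
  rw [Finset.prod_mul_distrib]
  ring

/-- Multi-box exchange. Up to a positive integer, the Vandermonde determinant in `s + k`
variables is the antisymmetrization of (Vandermonde in `s` variables) times (Vandermonde in the
other `k` variables) times `∏ g`, for `g` monic of degree `s`. -/
theorem exists_exchange {R : Type*} [CommRing R] [Nontrivial R] {s k : ℕ} (g : Polynomial R)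
    (hg : g.Monic) (hdeg : g.natDegree = s) (v : Fin s ⊕ Fin k → R) :
    ∃ N : ℕ, N ≠ 0 ∧ ∑ σ : Equiv.Perm (Fin s ⊕ Fin k), ((Equiv.Perm.sign σ : ℤ) : R) *
        ((Matrix.vandermonde fun i => v (σ (Sum.inl i))).det *
          ((∏ j, g.eval (v (σ (Sum.inr j)))) *
            (Matrix.vandermonde fun j => v (σ (Sum.inr j))).det)) =
      N * (Matrix.vandermonde fun i => v (finSumFinEquiv.symm i)).det := by
  classical
  -- `H` is a generalized Vandermonde matrix in the monic polynomials `1, …, Y^(s-1), g, …, g Y^(k-1)`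
  let pol : Fin s ⊕ Fin k → Polynomial R :=
    Sum.elim (fun j => Polynomial.X ^ (j : ℕ)) (fun j => g * Polynomial.X ^ (j : ℕ))
  let H : Matrix (Fin s ⊕ Fin k) (Fin s ⊕ Fin k) R := Matrix.of fun i j => (pol j).eval (v i)
  let msk : Fin s ⊕ Fin k → Fin s ⊕ Fin k → ℕ := fun i j => if i.isLeft = j.isLeft then 1 else 0
  refine ⟨∑ τ : Equiv.Perm (Fin s ⊕ Fin k), ∏ i, msk (τ i) i, ?_, ?_⟩
  · refine (Finset.sum_pos' (fun _ _ => Nat.zero_le _) ⟨1, Finset.mem_univ _, ?_⟩).ne'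
    simp [msk]
  have hH : (Matrix.vandermonde fun i => v (finSumFinEquiv.symm i)).det = H.det := by
    rw [Matrix.det_eval_matrixOfPolynomials_eq_det_vandermonde _
      (fun i => pol (finSumFinEquiv.symm i))]
    · exact Matrix.det_submatrix_equiv_self finSumFinEquiv.symm H
    · intro i
      obtain ⟨j, rfl⟩ := finSumFinEquiv.surjective i
      rcases j with j | j
      · simp [pol]
      · simp [pol, hg.natDegree_mul (Polynomial.monic_X_pow _), hdeg]
    · intro i
      rcases finSumFinEquiv.symm i with j | j
      · exact Polynomial.monic_X_pow _
      · exact hg.mul (Polynomial.monic_X_pow _)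
  have hm := sum_sign_det_mask (fun i j => ((msk i j : ℕ) : R)) H
  rw [hH]
  push_cast
  rw [← hm]
  refine Finset.sum_congr rfl fun σ _ => ?_
  congr 1
  rw [← Matrix.det_mul_column, ← Matrix.det_fromBlocks_zero₂₁ _ 0]
  congr 1
  ext (i | i) (j | j) <;> simp [msk, H, pol, Matrix.vandermonde]

/-! ### Column colourings and the exchange of boxes between two columns -/

/-- The label of a column of a bitableau: `false` marks the left diagram, `true` the right one. -/
abbrev Col (n : ℕ) := Bool × Fin (n + 1)

/-- The set of entries of the column `κ`, for a colouring `χ` of the entries by columns. -/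
def colSet {n : ℕ} (χ : Fin n → Col n) (κ : Col n) : Finset (Fin n) :=
  Finset.univ.filter fun i => χ i = κ

/-- The monomial factor `∏_{i ∈ A} x_i` contributed by a column of the right diagram. -/
def colWeight {R : Type*} [CommRing R] {n : ℕ} (x : Fin n → R) (b : Bool)
    (A : Finset (Fin n)) : R :=
  if b then ∏ i ∈ A, x i else 1

/-- The Specht polynomial, up to sign, of a bitableau whose entry `i` lies in column `χ i`. Only the
distribution of the entries among the columns is remembered, not the order inside a column. -/
def colPoly {R : Type*} [CommRing R] {n : ℕ} (x : Fin n → R) (χ : Fin n → Col n) : R :=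
  ∏ κ, colDelta x (colSet χ κ) * colWeight x κ.1 (colSet χ κ)

/-- Move the entries in `I` to the column `β`. -/
def recolor {n : ℕ} (χ : Fin n → Col n) (I : Finset (Fin n)) (β : Col n) : Fin n → Col n :=
  fun i => if i ∈ I then β else χ i

theorem colPoly_split {R : Type*} [CommRing R] {n : ℕ} (x : Fin n → R) (χ : Fin n → Col n)
    {α β : Col n} (hαβ : α ≠ β) :
    colPoly x χ = (colDelta x (colSet χ α) * colWeight x α.1 (colSet χ α)) *
      ((colDelta x (colSet χ β) * colWeight x β.1 (colSet χ β)) *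
        ∏ κ ∈ (Finset.univ.erase α).erase β,
          colDelta x (colSet χ κ) * colWeight x κ.1 (colSet χ κ)) := by
  rw [Finset.mul_prod_erase (Finset.univ.erase α) (fun κ => colDelta x (colSet χ κ) *
    colWeight x κ.1 (colSet χ κ)) (by simp [hαβ.symm]), Finset.mul_prod_erase _
      (fun κ => colDelta x (colSet χ κ) * colWeight x κ.1 (colSet χ κ)) (Finset.mem_univ α)]
  rfl

theorem colWeight_union {R : Type*} [CommRing R] {n : ℕ} (x : Fin n → R) (b : Bool)
    (A B : Finset (Fin n)) (h : Disjoint A B) :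
    colWeight x b (A ∪ B) = colWeight x b A * colWeight x b B := by
  unfold colWeight
  split_ifs
  · exact Finset.prod_union h
  · simp

/-- Moving `k` boxes from column `α` to column `β`, of heights `a` and `b` with `b + k ≤ a`: the
polynomial of a colouring lies in the ideal generated by the polynomials of the recoloured ones.
When `α` is on the left and `β` on the right the inequality must be strict, because the moved
entries then acquire a factor `x_i`. -/
theorem colPoly_mem_of_recolor {R : Type*} [CommRing R] [Nontrivial R] {n : ℕ} (x : Fin n → R)
    (hN : ∀ N : ℕ, N ≠ 0 → IsUnit (N : R)) (J : Ideal R) (χ : Fin n → Col n) {α β : Col n}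
    (hαβ : α ≠ β) {k : ℕ} (hk : (colSet χ β).card + k ≤ (colSet χ α).card)
    (hst : α.1 = false → β.1 = true → (colSet χ β).card + k < (colSet χ α).card)
    (h : ∀ I ⊆ colSet χ α, I.card = k → colPoly x (recolor χ I β) ∈ J) :
    colPoly x χ ∈ J := by
  classical
  set A := colSet χ α with hA
  set B := colSet χ β with hB
  have hdis : ∀ i, i ∈ A → i ∉ B := by
    intro i
    simp only [hA, hB, colSet, Finset.mem_filter, Finset.mem_univ, true_and]
    rintro rfl h
    exact hαβ h
  obtain ⟨s, hs⟩ : ∃ s, A.card = s + k := ⟨A.card - k, by omega⟩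
  obtain ⟨m, hm⟩ : ∃ m, s = m + B.card := ⟨s - B.card, by omega⟩
  let e : Fin s ⊕ Fin k ≃ A := Fintype.equivOfCardEq (by simp [hs])
  let w : Fin s ⊕ Fin k → Fin n := fun i => (e i : Fin n)
  have hw : Function.Injective w := Subtype.val_injective.comp e.injective
  have hwA : ∀ i, i ∈ A ↔ ∃ j, w j = i := fun i =>
    ⟨fun hi => ⟨e.symm ⟨i, hi⟩, by simp [w]⟩, by rintro ⟨j, rfl⟩; exact (e j).2⟩
  let g : Polynomial R := Polynomial.X ^ m * ∏ b ∈ B, (Polynomial.X - Polynomial.C (x b ^ 2))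
  have hgm : (∏ b ∈ B, (Polynomial.X - Polynomial.C (x b ^ 2))).Monic :=
    Polynomial.monic_prod_X_sub_C _ _
  have hg : g.Monic := (Polynomial.monic_X_pow _).mul hgm
  have hgd : g.natDegree = s := by
    rw [(Polynomial.monic_X_pow _).natDegree_mul hgm, Polynomial.natDegree_X_pow,
      Polynomial.natDegree_finsetProd_X_sub_C_eq_card, hm]
  obtain ⟨N, hN0, hsum⟩ := exists_exchange g hg hgd (fun i => x (w i) ^ 2)
  set Rest := ∏ κ ∈ (Finset.univ.erase α).erase β,
    colDelta x (colSet χ κ) * colWeight x κ.1 (colSet χ κ) with hRest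
  let M : R := colDelta x B * colWeight x β.1 B * colWeight x α.1 A * Rest
  have hdet : Associated (Matrix.vandermonde fun i => x (w (finSumFinEquiv.symm i)) ^ 2).det
      (colDelta x A) := by
    refine vandermonde_associated_colDelta x A (fun i => w (finSumFinEquiv.symm i))
      (hw.comp finSumFinEquiv.symm.injective) fun i => ?_
    rw [hwA]
    exact ⟨fun ⟨j, hj⟩ => ⟨finSumFinEquiv j, by simpa using hj⟩, fun ⟨j, hj⟩ => ⟨_, hj⟩⟩
  -- it suffices to treat the product of `M` with the right-hand side of the exchange identity
  suffices hmem : (N * (Matrix.vandermonde fun i => x (w (finSumFinEquiv.symm i)) ^ 2).det) * M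
      ∈ J by
    have h1 : Associated ((N * (Matrix.vandermonde fun i =>
        x (w (finSumFinEquiv.symm i)) ^ 2).det) * M) (colPoly x χ) := by
      have h2 : colPoly x χ = (1 * colDelta x A) * M := by
        rw [colPoly_split x χ hαβ]
        simp only [M, hRest, hA, hB]
        ring
      rw [h2]
      exact (((associated_one_iff_isUnit.2 (hN N hN0)).mul_mul hdet).mul_right M)
    exact Ideal.mem_of_dvd _ h1.dvd hmem
  rw [← hsum, Finset.sum_mul]
  refine J.sum_mem fun σ _ => ?_
  let I : Finset (Fin n) := Finset.univ.image fun j => w (σ (Sum.inr j))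
  have hinr : Function.Injective fun j : Fin k => w (σ (Sum.inr j)) :=
    hw.comp (σ.injective.comp Sum.inr_injective)
  have hinl : Function.Injective fun j : Fin s => w (σ (Sum.inl j)) :=
    hw.comp (σ.injective.comp Sum.inl_injective)
  have hIA : I ⊆ A := by
    intro i hi
    obtain ⟨j, -, rfl⟩ := Finset.mem_image.1 hi
    exact (hwA _).2 ⟨_, rfl⟩
  have hIc : I.card = k := by
    rw [Finset.card_image_of_injective _ hinr]; simp
  refine Ideal.mem_of_dvd _ ?_ (h I hIA hIc)
  have c1 : colSet (recolor χ I β) α = A \ I := by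
    ext i
    simp only [colSet, recolor, hA, Finset.mem_filter, Finset.mem_univ, true_and,
      Finset.mem_sdiff]
    grind
  have c2 : colSet (recolor χ I β) β = I ∪ B := by
    ext i
    simp only [colSet, recolor, hB, Finset.mem_filter, Finset.mem_univ, true_and,
      Finset.mem_union]
    grind
  have c3 : ∀ κ ∈ (Finset.univ.erase α).erase β,
      colSet (recolor χ I β) κ = colSet χ κ := by
    intro κ hκ
    ext i
    have := @hIA i
    simp only [colSet, recolor, hA, Finset.mem_filter, Finset.mem_univ, true_and,
      Finset.mem_erase] at *
    grind
  have hIB : Disjoint I B := Finset.disjoint_left.2 fun i hi => hdis i (hIA hi)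
  rw [colPoly_split x _ hαβ, c1, c2, Finset.prod_congr rfl fun κ hκ => by rw [c3 κ hκ], ← hRest,
    colWeight_union x _ I B hIB]
  have d1 : colDelta x (A \ I) ∣
      (Matrix.vandermonde fun i => x (w (σ (Sum.inl i))) ^ 2).det := by
    refine (vandermonde_associated_colDelta x _ (fun i => w (σ (Sum.inl i))) hinl
      fun i => ?_).symm.dvd
    rw [Finset.mem_sdiff, hwA]
    constructor
    · rintro ⟨⟨j, rfl⟩, hj⟩
      obtain ⟨j, rfl⟩ := σ.surjective j
      rcases j with j | j
      · exact ⟨j, rfl⟩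
      · exact absurd (Finset.mem_image_of_mem _ (Finset.mem_univ j)) hj
    · rintro ⟨j, rfl⟩
      refine ⟨⟨_, rfl⟩, fun hj => ?_⟩
      obtain ⟨j', -, hj'⟩ := Finset.mem_image.1 hj
      simpa using σ.injective (hw hj')
  have d2 : colDelta x (I ∪ B) ∣ (Matrix.vandermonde fun i => x (w (σ (Sum.inr i))) ^ 2).det *
      colDelta x B * ∏ i ∈ I, ∏ b ∈ B, (x i ^ 2 - x b ^ 2) := by
    refine (colDelta_union x I B hIB).dvd.trans ?_
    refine mul_dvd_mul (mul_dvd_mul ?_ dvd_rfl) dvd_rfl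
    refine (vandermonde_associated_colDelta x _ (fun i => w (σ (Sum.inr i))) hinr
      fun i => ?_).symm.dvd
    simp [I]
  have d3 : colWeight x α.1 (A \ I) * colWeight x β.1 I ∣
      colWeight x α.1 A * ∏ i ∈ I, (x i ^ 2) ^ m := by
    have : colWeight x α.1 A = colWeight x α.1 (A \ I) * colWeight x α.1 I := by
      rw [← colWeight_union x _ _ _ Finset.sdiff_disjoint, Finset.sdiff_union_of_subset hIA]
    rw [this, mul_assoc]
    refine mul_dvd_mul dvd_rfl ?_
    unfold colWeight
    rcases hβ : β.1 with _ | _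
    · simp
    rcases hα : α.1 with _ | _
    · simp only [Bool.false_eq_true, if_true, if_false, one_mul]
      have := hst hα hβ
      refine Finset.prod_dvd_prod_of_dvd _ _ fun i _ => ?_
      rw [← pow_mul]
      exact dvd_pow_self _ (by omega)
    · simp
  have hev : ∏ j, g.eval (x (w (σ (Sum.inr j))) ^ 2) =
      (∏ i ∈ I, (x i ^ 2) ^ m) * ∏ i ∈ I, ∏ b ∈ B, (x i ^ 2 - x b ^ 2) := by
    rw [← Finset.prod_mul_distrib, Finset.prod_image fun a _ b _ hab => hinr hab]
    refine Finset.prod_congr rfl fun j _ => ?_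
    simp [g, Polynomial.eval_prod]
  rw [hev]
  have hd := mul_dvd_mul (mul_dvd_mul (mul_dvd_mul d1 d2) d3)
    (dvd_refl (colWeight x β.1 B * Rest))
  refine Dvd.dvd.trans (Dvd.intro_left 1 ?_) (hd.trans
    (Dvd.intro_left ((Equiv.Perm.sign σ : ℤ) : R) ?_))
  · ring
  · simp only [M]; ring

/-! ### The combinatorics of bidominance -/

/-- The parts of a bipartition interleaved as `λ₁, μ₁, λ₂, μ₂, …`. -/
def interleave (f g : ℕ → ℕ) (j : ℕ) : ℕ := if j % 2 = 0 then f (j / 2) else g (j / 2)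

theorem sum_interleave (f g : ℕ → ℕ) (k : ℕ) :
    ∑ j ∈ Finset.range (2 * k), interleave f g j = ∑ j ∈ Finset.range k, (f j + g j) := by
  induction k with
  | zero => simp
  | succ k ih =>
    rw [show 2 * (k + 1) = 2 * k + 1 + 1 by ring, Finset.sum_range_succ, Finset.sum_range_succ, ih,
      Finset.sum_range_succ]
    have h1 : interleave f g (2 * k) = f k := by simp [interleave]
    have h2 : interleave f g (2 * k + 1) = g k := by
      simp [interleave, Nat.add_mod, show (2 * k + 1) / 2 = k by omega]
    omega

theorem sum_interleave_succ (f g : ℕ → ℕ) (k : ℕ) :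
    ∑ j ∈ Finset.range (2 * k + 1), interleave f g j =
      (∑ j ∈ Finset.range k, (f j + g j)) + f k := by
  rw [Finset.sum_range_succ, sum_interleave]
  simp [interleave]

/-- Bidominance of bipartitions is dominance of their interleaved part sequences. -/
theorem bidomFun_iff (l₁ m₁ l₂ m₂ : ℕ → ℕ) : BidomFun l₁ m₁ l₂ m₂ ↔
    ∀ k, ∑ j ∈ Finset.range k, interleave l₁ m₁ j ≤ ∑ j ∈ Finset.range k, interleave l₂ m₂ j := by
  constructor
  · rintro ⟨h1, h2⟩ k
    obtain ⟨i, rfl | rfl⟩ := Nat.even_or_odd' k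
    · rw [sum_interleave, sum_interleave]; exact h1 i
    · rw [sum_interleave_succ, sum_interleave_succ]; exact h2 i
  · intro h
    refine ⟨fun k => ?_, fun k => ?_⟩
    · have := h (2 * k); rwa [sum_interleave, sum_interleave] at this
    · have := h (2 * k + 1); rwa [sum_interleave_succ, sum_interleave_succ] at this

/-- If `c` is strictly dominated by `d` (both being interleaved part sequences), then some `k`
boxes can be moved between two columns of `c`, from the positions `P - 2(k-1), …, P - 2, P` to
the positions `Q, Q + 2, …, Q + 2(k-1)`, so that the result `c'` is still dominated by `d`.
Here `Q` is the first position where `c` and `d` differ. -/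
theorem exists_move (c d : ℕ → ℕ) (hc : ∀ j, c (j + 2) ≤ c j) (hd : ∀ j, d (j + 2) ≤ d j)
    (hdom : ∀ m, ∑ j ∈ Finset.range m, c j ≤ ∑ j ∈ Finset.range m, d j) (M : ℕ)
    (hc0 : ∀ j, M ≤ j → c j = 0)
    (htot : ∀ m, M ≤ m → ∑ j ∈ Finset.range m, c j = ∑ j ∈ Finset.range m, d j)
    (hne : c ≠ d) :
    ∃ (Q P k : ℕ) (c' : ℕ → ℕ), 1 ≤ k ∧ Q + 2 * k ≤ P + 1 ∧ (k = 1 ∨ P + 1 = Q + 2 * k) ∧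
      c Q < d Q ∧ (2 ≤ Q → c Q < c (Q - 2)) ∧ c (P + 2) < c P ∧
      (∀ j, c' j + (if j % 2 = P % 2 ∧ P < j + 2 * k ∧ j ≤ P then 1 else 0) =
        c j + (if j % 2 = Q % 2 ∧ Q ≤ j ∧ j < Q + 2 * k then 1 else 0)) ∧
      (∀ m, ∑ j ∈ Finset.range m, c' j ≤ ∑ j ∈ Finset.range m, d j) ∧
      (∀ m, ∑ j ∈ Finset.range m, c j ≤ ∑ j ∈ Finset.range m, c' j) ∧
      ∑ j ∈ Finset.range (Q + 1), c j < ∑ j ∈ Finset.range (Q + 1), c' j ∧ Q < M := by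
  classical
  have hex : ∃ j, c j ≠ d j := by
    by_contra h
    exact hne (funext fun j => by_contra fun hj => h ⟨j, hj⟩)
  obtain ⟨Q, hQ, hQmin⟩ : ∃ Q, c Q ≠ d Q ∧ ∀ j < Q, c j = d j :=
    ⟨Nat.find hex, Nat.find_spec hex, fun j hj => not_not.1 (Nat.find_min hex hj)⟩
  set S : ℕ → ℕ := fun m => ∑ j ∈ Finset.range m, c j with hS
  set T : ℕ → ℕ := fun m => ∑ j ∈ Finset.range m, d j with hT
  have Ss : ∀ m, S (m + 1) = S m + c m := fun m => Finset.sum_range_succ _ _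
  have Ts : ∀ m, T (m + 1) = T m + d m := fun m => Finset.sum_range_succ _ _
  have hST : ∀ m, S m ≤ T m := hdom
  have hQe : S Q = T Q := Finset.sum_congr rfl fun j hj => hQmin j (Finset.mem_range.1 hj)
  have hQlt : c Q < d Q := by
    have := hST (Q + 1); have := Ss Q; have := Ts Q; omega
  have hQM : Q < M := by
    by_contra h
    have := htot (Q + 1) (by omega)
    have : S (Q + 1) = T (Q + 1) := this
    have := Ss Q; have := Ts Q; omega
  have hQ2 : 2 ≤ Q → c Q < c (Q - 2) := by
    intro h
    have h1 := hQmin (Q - 2) (by omega)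
    have h2 := hd (Q - 2)
    rw [Nat.sub_add_cancel h] at h2
    omega
  by_cases hcase : d (Q + 1) < c (Q + 1)
  · -- exchange of `k = r + 1` boxes between a left and a right column
    have hex2 : ∃ r, c (Q + 2 * r + 3) < c (Q + 2 * r + 1) := by
      by_contra h
      push Not at h
      have : ∀ r, c (Q + 1) ≤ c (Q + 2 * r + 1) := by
        intro r
        induction r with
        | zero => simp
        | succ r ih => exact ih.trans (h r)
      have h1 := this M
      rw [hc0 (Q + 2 * M + 1) (by omega)] at h1
      omega
    obtain ⟨r, hr, hrmin⟩ : ∃ r, c (Q + 2 * r + 3) < c (Q + 2 * r + 1) ∧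
        ∀ i < r, c (Q + 2 * i + 3) = c (Q + 2 * i + 1) :=
      ⟨Nat.find hex2, Nat.find_spec hex2, fun i hi =>
        le_antisymm (hc _) (not_lt.1 (Nat.find_min hex2 hi))⟩
    have hcr : ∀ i ≤ r, c (Q + 2 * i + 1) = c (Q + 1) := by
      intro i
      induction i with
      | zero => simp
      | succ i ih =>
        intro hi
        rw [← ih (by omega), ← hrmin i (by omega)]
        congr 1
    have hdr : ∀ i, d (Q + 2 * i + 1) ≤ d (Q + 1) := by
      intro i
      induction i with
      | zero => simp
      | succ i ih => exact (hd _).trans ih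
    have hD : ∀ i ≤ r, S (Q + 2 * i + 1) < T (Q + 2 * i + 1) := by
      intro i hi
      have h1 := Ss (Q + 2 * i + 1)
      have h2 := Ts (Q + 2 * i + 1)
      have h3 := hST (Q + 2 * i + 1 + 1)
      have h4 := hcr i hi
      have h5 := hdr i
      omega
    let c' : ℕ → ℕ := fun j => c j + (if j % 2 = Q % 2 ∧ Q ≤ j ∧ j < Q + 2 * (r + 1) then 1 else 0) -
      (if j % 2 = (Q + 2 * r + 1) % 2 ∧ Q + 2 * r + 1 < j + 2 * (r + 1) ∧ j ≤ Q + 2 * r + 1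
        then 1 else 0)
    have hc' : ∀ j, c' j + (if j % 2 = (Q + 2 * r + 1) % 2 ∧ Q + 2 * r + 1 < j + 2 * (r + 1) ∧
        j ≤ Q + 2 * r + 1 then 1 else 0) =
        c j + (if j % 2 = Q % 2 ∧ Q ≤ j ∧ j < Q + 2 * (r + 1) then 1 else 0) := by
      intro j
      refine Nat.sub_add_cancel ?_
      split_ifs with h1 h2
      · omega
      · obtain ⟨i, hi⟩ : ∃ i, j = Q + 2 * i + 1 := ⟨(j - Q - 1) / 2, by omega⟩
        have := hcr i (by omega)
        rw [hi]; omega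
      · omega
      · omega
    have hS' : ∀ m, ∑ j ∈ Finset.range m, c' j =
        S m + (if m % 2 = (Q + 1) % 2 ∧ Q + 1 ≤ m ∧ m ≤ Q + 2 * r + 1 then 1 else 0) := by
      intro m
      induction m with
      | zero => simp [hS]
      | succ m ih =>
        rw [Finset.sum_range_succ, ih, Ss]
        have := hc' m
        split_ifs at this ⊢ <;> omega
    refine ⟨Q, Q + 2 * r + 1, r + 1, c', by omega, by omega, Or.inr (by omega), hQlt, hQ2, hr,
      hc', fun m => ?_, fun m => ?_, ?_, hQM⟩
    · rw [hS']
      split_ifs with h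
      · obtain ⟨i, rfl⟩ : ∃ i, m = Q + 2 * i + 1 := ⟨(m - Q - 1) / 2, by omega⟩
        exact hD i (by omega)
      · exact hST m
    · rw [hS']; exact Nat.le_add_right _ _
    · rw [hS', if_pos (by omega)]; exact Nat.lt_succ_self _
  · -- a single box is moved
    have hex3 : ∃ e, Q < e ∧ S e = T e := ⟨M, hQM, htot M le_rfl⟩
    obtain ⟨e, ⟨heQ, hee⟩, hemin⟩ : ∃ e, (Q < e ∧ S e = T e) ∧ ∀ m < e, ¬ (Q < m ∧ S m = T m) :=
      ⟨Nat.find hex3, Nat.find_spec hex3, fun m hm => Nat.find_min hex3 hm⟩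
    have hpos : ∀ m, Q < m → m < e → S m < T m := fun m h1 h2 =>
      lt_of_le_of_ne (hST m) fun h => hemin m h2 ⟨h1, h⟩
    have hQ1 := Ss Q
    have hQ1' := Ts Q
    have hQ2s := Ss (Q + 1)
    have hQ2t := Ts (Q + 1)
    have he3 : Q + 3 ≤ e := by
      by_contra h
      obtain rfl | rfl : e = Q + 1 ∨ e = Q + 1 + 1 := by omega
      all_goals omega
    obtain ⟨P, hQP, hPe, hP⟩ : ∃ P, Q < P ∧ P < e ∧ c (P + 2) < c P := by
      obtain ⟨t, rfl⟩ : ∃ t, e = t + 2 := ⟨e - 2, by omega⟩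
      by_contra h
      push Not at h
      have h1 := h t (by omega) (by omega)
      have h2 := h (t + 1) (by omega) (by omega)
      have h3 := hd t
      have h4 := hd (t + 1)
      have h5 := hpos t (by omega) (by omega)
      have h6 := hST (t + 4)
      have a1 := Ss t; have a2 := Ss (t + 1); have a3 := Ss (t + 2); have a4 := Ss (t + 3)
      have b1 := Ts t; have b2 := Ts (t + 1); have b3 := Ts (t + 2); have b4 := Ts (t + 3)
      simp only [add_assoc, Nat.reduceAdd] at *
      omega
    let c' : ℕ → ℕ := fun j => c j + (if j % 2 = Q % 2 ∧ Q ≤ j ∧ j < Q + 2 * 1 then 1 else 0) -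
      (if j % 2 = P % 2 ∧ P < j + 2 * 1 ∧ j ≤ P then 1 else 0)
    have hc' : ∀ j, c' j + (if j % 2 = P % 2 ∧ P < j + 2 * 1 ∧ j ≤ P then 1 else 0) =
        c j + (if j % 2 = Q % 2 ∧ Q ≤ j ∧ j < Q + 2 * 1 then 1 else 0) := by
      intro j
      refine Nat.sub_add_cancel ?_
      split_ifs with h1 h2
      · omega
      · obtain rfl : j = P := by omega
        omega
      · omega
      · omega
    have hS' : ∀ m, ∑ j ∈ Finset.range m, c' j =
        S m + (if Q < m ∧ m ≤ P then 1 else 0) := by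
      intro m
      induction m with
      | zero => simp [hS]
      | succ m ih =>
        rw [Finset.sum_range_succ, ih, Ss]
        have := hc' m
        split_ifs at this ⊢ <;> omega
    refine ⟨Q, P, 1, c', le_rfl, by omega, Or.inl rfl, hQlt, hQ2, hP,
      hc', fun m => ?_, fun m => ?_, ?_, hQM⟩
    · rw [hS']
      split_ifs with h
      · exact hpos m h.1 (by omega)
      · exact hST m
    · rw [hS']; exact Nat.le_add_right _ _
    · rw [hS', if_pos (by omega)]; exact Nat.lt_succ_self _

/-! ### Bidominance implies membership of the column polynomials -/

/-- The diagram (`false` left, `true` right) whose rows occupy the positions of the parity of `j`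
in the interleaved part sequence. -/
def side (j : ℕ) : Bool := decide (j % 2 = 1)

theorem side_eq_iff (i j : ℕ) : side i = side j ↔ i % 2 = j % 2 := by
  unfold side
  rw [decide_eq_decide]
  omega

/-- The columns of `χ` have the heights prescribed by the interleaved part sequence `c`: for each
position `j`, exactly `c j` columns reach it. The order of the columns plays no role. -/
def HasShape {n : ℕ} (χ : Fin n → Col n) (c : ℕ → ℕ) : Prop :=
  ∀ j, (Finset.univ.filter fun κ : Col n => κ.1 = side j ∧ j / 2 < (colSet χ κ).card).card = c j

theorem HasShape.antitone {n : ℕ} {χ : Fin n → Col n} {c : ℕ → ℕ} (h : HasShape χ c) (j : ℕ) :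
    c (j + 2) ≤ c j := by
  rw [← h, ← h]
  refine Finset.card_le_card fun κ => ?_
  simp only [Finset.mem_filter, Finset.mem_univ, true_and]
  rintro ⟨h1, h2⟩
  exact ⟨by rw [h1, side_eq_iff]; omega, by omega⟩

theorem HasShape.eq_zero {n : ℕ} {χ : Fin n → Col n} {c : ℕ → ℕ} (h : HasShape χ c) (j : ℕ)
    (hj : 2 * n ≤ j) : c j = 0 := by
  rw [← h, Finset.card_eq_zero, Finset.filter_eq_empty_iff]
  rintro κ - ⟨-, h2⟩
  have := Finset.card_le_univ (colSet χ κ)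
  rw [Fintype.card_fin] at this
  omega

theorem HasShape.exists_removable {n : ℕ} {χ : Fin n → Col n} {c : ℕ → ℕ} (h : HasShape χ c)
    (j : ℕ) (hj : c (j + 2) < c j) : ∃ κ : Col n, κ.1 = side j ∧ (colSet χ κ).card = j / 2 + 1 := by
  rw [← h, ← h] at hj
  obtain ⟨κ, h1, h2⟩ := Finset.exists_mem_notMem_of_card_lt_card hj
  simp only [Finset.mem_filter, Finset.mem_univ, true_and, not_and, not_lt] at h1 h2
  refine ⟨κ, h1.1, ?_⟩
  have := h2 (by rw [h1.1, side_eq_iff]; omega)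
  omega

theorem HasShape.exists_addable {n : ℕ} {χ : Fin n → Col n} {c : ℕ → ℕ} (h : HasShape χ c)
    (j : ℕ) (hj : 2 ≤ j → c j < c (j - 2)) (hn : c j ≤ n) :
    ∃ κ : Col n, κ.1 = side j ∧ (colSet χ κ).card = j / 2 := by
  by_cases h2 : 2 ≤ j
  · obtain ⟨κ, h3, h4⟩ := h.exists_removable (j - 2) (by rw [Nat.sub_add_cancel h2]; exact hj h2)
    exact ⟨κ, by rw [h3, side_eq_iff]; omega, by omega⟩
  · -- among the `n + 1` available columns of each diagram at least one is empty
    by_contra hcon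
    push Not at hcon
    have : (Finset.univ.image fun y : Fin (n + 1) => ((side j, y) : Col n)).card ≤ c j := by
      rw [← h]
      refine Finset.card_le_card fun κ => ?_
      simp only [Finset.mem_image, Finset.mem_filter, Finset.mem_univ, true_and]
      rintro ⟨y, rfl⟩
      have := hcon (side j, y) rfl
      exact ⟨rfl, by omega⟩
    rw [Finset.card_image_of_injective _ (fun a b hab => (Prod.ext_iff.1 hab).2)] at this
    simp at this
    omega

theorem HasShape.recolor {n : ℕ} {χ : Fin n → Col n} {c c' : ℕ → ℕ} (h : HasShape χ c)
    {α β : Col n} (hαβ : α ≠ β) {P Q k : ℕ} (hα : α.1 = side P)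
    (hαc : (colSet χ α).card = P / 2 + 1) (hβ : β.1 = side Q) (hβc : (colSet χ β).card = Q / 2)
    (hc' : ∀ j, c' j + (if j % 2 = P % 2 ∧ P < j + 2 * k ∧ j ≤ P then 1 else 0) =
        c j + (if j % 2 = Q % 2 ∧ Q ≤ j ∧ j < Q + 2 * k then 1 else 0))
    (I : Finset (Fin n)) (hI : I ⊆ colSet χ α) (hIk : I.card = k) :
    HasShape (recolor χ I β) c' := by
  classical
  have e1 : colSet (SpechtBn.recolor χ I β) α = colSet χ α \ I := by
    ext i
    simp only [colSet, SpechtBn.recolor, Finset.mem_filter, Finset.mem_univ, true_and,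
      Finset.mem_sdiff]
    grind
  have e2 : colSet (SpechtBn.recolor χ I β) β = colSet χ β ∪ I := by
    ext i
    simp only [colSet, SpechtBn.recolor, Finset.mem_filter, Finset.mem_univ, true_and,
      Finset.mem_union]
    grind
  have e3 : ∀ κ, κ ≠ α → κ ≠ β →
      (colSet (SpechtBn.recolor χ I β) κ) = (colSet χ κ) := by
    intro κ h1 h2
    ext i
    have := @hI i
    simp only [colSet, SpechtBn.recolor, Finset.mem_filter, Finset.mem_univ, true_and] at *
    grind
  have hdisj : Disjoint (colSet χ β) I := by
    rw [Finset.disjoint_left]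
    intro i h1 h2
    have := hI h2
    simp only [colSet, Finset.mem_filter, Finset.mem_univ, true_and] at h1 this
    exact hαβ (this.symm.trans h1)
  have f1 : (colSet (SpechtBn.recolor χ I β) α).card + k = P / 2 + 1 := by
    rw [e1, ← hIk, Finset.card_sdiff_add_card_eq_card hI, hαc]
  have f2 : (colSet (SpechtBn.recolor χ I β) β).card = Q / 2 + k := by
    rw [e2, Finset.card_union_of_disjoint hdisj, hβc, hIk]
  intro j
  have expand : ∀ χ' : Fin n → Col n, (Finset.univ.filter fun κ : Col n =>
      κ.1 = side j ∧ j / 2 < (colSet χ' κ).card).card =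
      (if α.1 = side j ∧ j / 2 < (colSet χ' α).card then 1 else 0) +
      ((if β.1 = side j ∧ j / 2 < (colSet χ' β).card then 1 else 0) +
      ∑ κ ∈ (Finset.univ.erase α).erase β,
        if κ.1 = side j ∧ j / 2 < (colSet χ' κ).card then 1 else 0) := by
    intro χ'
    rw [Finset.card_filter, Finset.add_sum_erase (Finset.univ.erase α)
      (fun κ => if κ.1 = side j ∧ j / 2 < (colSet χ' κ).card then 1 else 0)
      (by simp [hαβ.symm]), Finset.add_sum_erase _
      (fun κ => if κ.1 = side j ∧ j / 2 < (colSet χ' κ).card then 1 else 0) (Finset.mem_univ α)]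
  have h1 := h j
  rw [expand] at h1 ⊢
  have h2 := hc' j
  have h3 : ∑ κ ∈ (Finset.univ.erase α).erase β,
        (if κ.1 = side j ∧ j / 2 < (colSet (SpechtBn.recolor χ I β) κ).card then 1 else 0) =
      ∑ κ ∈ (Finset.univ.erase α).erase β,
        if κ.1 = side j ∧ j / 2 < (colSet χ κ).card then 1 else 0 := by
    refine Finset.sum_congr rfl fun κ hκ => ?_
    simp only [Finset.mem_erase, Finset.mem_univ, and_true] at hκ
    rw [e3 κ hκ.2 hκ.1]
  rw [h3]
  have f1' : (colSet (SpechtBn.recolor χ I β) α).card = P / 2 + 1 - k := by omega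
  simp only [hα, hβ, side_eq_iff, hαc, hβc] at h1
  simp only [hα, hβ, side_eq_iff, f1', f2]
  clear f1' e1 e2 e3 expand h3
  split_ifs at h1 h2 ⊢ <;> omega

/-- If the shape `c` is dominated by `d`, every column polynomial of shape `c` lies in every ideal
containing the column polynomials of shape `d`. -/
theorem colPoly_mem_of_dominated {R : Type*} [CommRing R] [Nontrivial R] {n : ℕ} (x : Fin n → R)
    (hN : ∀ N : ℕ, N ≠ 0 → IsUnit (N : R)) (J : Ideal R) (d : ℕ → ℕ)
    (hd : ∀ j, d (j + 2) ≤ d j) (hdn : ∀ j, d j ≤ n)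
    (hJ : ∀ χ, HasShape χ d → colPoly x χ ∈ J) (χ : Fin n → Col n) (c : ℕ → ℕ)
    (hχ : HasShape χ c)
    (hdom : ∀ m, ∑ j ∈ Finset.range m, c j ≤ ∑ j ∈ Finset.range m, d j)
    (htot : ∀ m, 2 * n ≤ m → ∑ j ∈ Finset.range m, c j = ∑ j ∈ Finset.range m, d j) :
    colPoly x χ ∈ J := by
  induction hμ : ∑ m ∈ Finset.range (2 * n + 1),
      (∑ j ∈ Finset.range m, d j - ∑ j ∈ Finset.range m, c j) using Nat.strong_induction_on
    generalizing χ c with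
  | _ μ ih =>
  by_cases hcd : c = d
  · exact hJ χ (hcd ▸ hχ)
  obtain ⟨Q, P, k, c', hk, hQP, hor, hQ, hQ2, hP, hc', hd', hcc', hlt, hQM⟩ :=
    exists_move c d hχ.antitone hd hdom (2 * n) hχ.eq_zero htot hcd
  obtain ⟨α, hα, hαc⟩ := hχ.exists_removable P hP
  obtain ⟨β, hβ, hβc⟩ := hχ.exists_addable Q hQ2 (hQ.le.trans (hdn Q))
  have hαβ : α ≠ β := by
    rintro rfl
    have := (side_eq_iff P Q).1 (hα.symm.trans hβ)
    omega
  refine colPoly_mem_of_recolor x hN J χ hαβ (k := k) (by omega) ?_ fun I hI hIk => ?_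
  · intro h1 h2
    rw [hα] at h1
    rw [hβ] at h2
    simp only [side, decide_eq_false_iff_not, decide_eq_true_eq] at h1 h2
    omega
  · refine ih _ ?_ _ c' (hχ.recolor hαβ hα hαc hβ hβc hc' I hI hIk) hd' ?_ rfl
    · rw [← hμ]
      refine Finset.sum_lt_sum (fun m _ => Nat.sub_le_sub_left (hcc' m) _)
        ⟨Q + 1, Finset.mem_range.2 (by omega), ?_⟩
      have := hd' (Q + 1)
      omega
    · intro m hm
      exact le_antisymm (hd' m) ((htot m hm) ▸ hcc' m)

/-! ### Bitableaux and column colourings -/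

theorem IsBP.left_le {n : ℕ} {f g : ℕ → ℕ} (h : IsBP n f g) (i : ℕ) : f i ≤ n := by
  by_cases hi : i < n
  · have := Finset.single_le_sum (f := fun i => f i + g i) (fun _ _ => Nat.zero_le _)
      (Finset.mem_range.2 hi)
    have h3 := h.2.2
    omega
  · rw [h.1.2 i (by omega)]; exact Nat.zero_le _

theorem IsBP.right_le {n : ℕ} {f g : ℕ → ℕ} (h : IsBP n f g) (i : ℕ) : g i ≤ n := by
  by_cases hi : i < n
  · have := Finset.single_le_sum (f := fun i => f i + g i) (fun _ _ => Nat.zero_le _)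
      (Finset.mem_range.2 hi)
    have h3 := h.2.2
    omega
  · rw [h.2.1.2 i (by omega)]; exact Nat.zero_le _

theorem mem_cellsF_iff {n : ℕ} {f : ℕ → ℕ} (hf : IsPartitionFun n f) (hn : ∀ i, f i ≤ n)
    (c : ℕ × ℕ) : c ∈ cellsF n f ↔ c.2 < f c.1 := by
  simp only [cellsF, Finset.mem_filter, Finset.mem_product, Finset.mem_range]
  refine ⟨fun h => h.2, fun h => ⟨⟨?_, h.trans_le (hn _)⟩, h⟩⟩
  by_contra hc
  rw [hf.2 _ (by omega)] at h
  omega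

section
variable {n : ℕ} {f g : ℕ → ℕ} (bt : Bitableau n f g)

theorem Bitableau.left_inj {c c' : ℕ × ℕ} (hc : c ∈ cellsF n f) (hc' : c' ∈ cellsF n f)
    (h : bt.left c = bt.left c') : c = c' :=
  Sum.inl_injective ((bt.bij (bt.left c)).unique (y₁ := Sum.inl c) (y₂ := Sum.inl c')
    ⟨hc, rfl⟩ ⟨hc', h.symm⟩)

theorem Bitableau.right_inj {c c' : ℕ × ℕ} (hc : c ∈ cellsF n g) (hc' : c' ∈ cellsF n g)
    (h : bt.right c = bt.right c') : c = c' :=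
  Sum.inr_injective ((bt.bij (bt.right c)).unique (y₁ := Sum.inr c) (y₂ := Sum.inr c')
    ⟨hc, rfl⟩ ⟨hc', h.symm⟩)

theorem Bitableau.left_ne_right {c c' : ℕ × ℕ} (hc : c ∈ cellsF n f) (hc' : c' ∈ cellsF n g) :
    bt.left c ≠ bt.right c' := fun h =>
  Sum.inl_ne_inr ((bt.bij (bt.left c)).unique (y₁ := Sum.inl c) (y₂ := Sum.inr c')
    ⟨hc, rfl⟩ ⟨hc', h.symm⟩)

theorem Bitableau.cover (k : Fin n) :
    (∃ c ∈ cellsF n f, bt.left c = k) ∨ (∃ c ∈ cellsF n g, bt.right c = k) := by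
  obtain ⟨c | c, hc⟩ := (bt.bij k).exists
  · exact Or.inl ⟨c, hc⟩
  · exact Or.inr ⟨c, hc⟩

/-- The `B_n`-Specht polynomial evaluated at a tuple `x` of elements of a commutative ring. -/
def Bitableau.poly {R : Type*} [CommRing R] (x : Fin n → R) : R :=
  (∏ q ∈ colPairs n f, (x (bt.left q.1) ^ 2 - x (bt.left q.2) ^ 2)) *
  (∏ q ∈ colPairs n g, (x (bt.right q.1) ^ 2 - x (bt.right q.2) ^ 2)) *
  ∏ c ∈ cellsF n g, x (bt.right c)

/-- `χ` sends each entry of `bt` to a label of its column: entries of the left (right) tableau get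
left (right) labels, equal exactly for entries of the same column. -/
def Bitableau.Matches (χ : Fin n → Col n) : Prop :=
  (∀ c ∈ cellsF n f, (χ (bt.left c)).1 = false) ∧
  (∀ c ∈ cellsF n g, (χ (bt.right c)).1 = true) ∧
  (∀ c ∈ cellsF n f, ∀ c' ∈ cellsF n f, χ (bt.left c) = χ (bt.left c') ↔ c.2 = c'.2) ∧
  (∀ c ∈ cellsF n g, ∀ c' ∈ cellsF n g, χ (bt.right c) = χ (bt.right c') ↔ c.2 = c'.2)

end

theorem colPoly_eq {R : Type*} [CommRing R] {n : ℕ} (x : Fin n → R) (χ : Fin n → Col n) :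
    colPoly x χ = (∏ p ∈ (Finset.univ : Finset (Fin n × Fin n)).filter
      (fun p => p.1 < p.2 ∧ χ p.1 = χ p.2), (x p.1 ^ 2 - x p.2 ^ 2)) *
      ∏ i ∈ Finset.univ.filter (fun i => (χ i).1 = true), x i := by
  unfold colPoly
  rw [Finset.prod_mul_distrib]
  congr 1
  · rw [← Finset.prod_fiberwise _ (fun p : Fin n × Fin n => χ p.1)]
    refine Finset.prod_congr rfl fun κ _ => ?_
    refine Finset.prod_congr ?_ fun _ _ => rfl
    ext ⟨i, j⟩
    simp only [colSet, Finset.mem_filter, Finset.mem_univ, true_and, Finset.mem_product]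
    grind
  · rw [← Finset.prod_fiberwise _ (fun i : Fin n => χ i)]
    refine Finset.prod_congr rfl fun κ _ => ?_
    unfold colWeight
    split_ifs with h
    · refine Finset.prod_congr ?_ fun _ _ => rfl
      ext i
      simp only [colSet, Finset.mem_filter, Finset.mem_univ, true_and]
      grind
    · symm
      refine Finset.prod_eq_one fun i hi => ?_
      simp only [Finset.mem_filter, Finset.mem_univ, true_and] at hi
      grind

theorem Bitableau.Matches.associated {R : Type*} [CommRing R] {n : ℕ} {f g : ℕ → ℕ}
    {bt : Bitableau n f g} {χ : Fin n → Col n} (h : bt.Matches χ) (x : Fin n → R) :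
    Associated (bt.poly x) (colPoly x χ) := by
  classical
  obtain ⟨hL, hR, hLL, hRR⟩ := h
  rw [colPoly_eq]
  unfold Bitableau.poly
  have mcp : ∀ (u : ℕ → ℕ) (q : (ℕ × ℕ) × (ℕ × ℕ)), q ∈ colPairs n u ↔
      q.1 ∈ cellsF n u ∧ q.2 ∈ cellsF n u ∧ q.1.2 = q.2.2 ∧ q.1.1 < q.2.1 := by
    intro u q
    simp [colPairs, and_assoc]
  refine Associated.mul_mul ?_ (Associated.of_eq ?_)
  · have e : (∏ q ∈ colPairs n f, (x (bt.left q.1) ^ 2 - x (bt.left q.2) ^ 2)) *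
        (∏ q ∈ colPairs n g, (x (bt.right q.1) ^ 2 - x (bt.right q.2) ^ 2)) =
        ∏ p ∈ (colPairs n f).image (fun q => (bt.left q.1, bt.left q.2)) ∪
          (colPairs n g).image (fun q => (bt.right q.1, bt.right q.2)),
          (x p.1 ^ 2 - x p.2 ^ 2) := by
      rw [Finset.prod_union, Finset.prod_image, Finset.prod_image]
      · intro p hp q hq hpq
        have hp := (mcp _ _).1 hp
        have hq := (mcp _ _).1 hq
        simp only [Prod.mk.injEq] at hpq
        exact Prod.ext (bt.right_inj hp.1 hq.1 hpq.1) (bt.right_inj hp.2.1 hq.2.1 hpq.2)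
      · intro p hp q hq hpq
        have hp := (mcp _ _).1 hp
        have hq := (mcp _ _).1 hq
        simp only [Prod.mk.injEq] at hpq
        exact Prod.ext (bt.left_inj hp.1 hq.1 hpq.1) (bt.left_inj hp.2.1 hq.2.1 hpq.2)
      · rw [Finset.disjoint_left]
        intro w hw hw'
        obtain ⟨p, hp, rfl⟩ := Finset.mem_image.1 hw
        obtain ⟨q, hq, hpq⟩ := Finset.mem_image.1 hw'
        exact bt.left_ne_right ((mcp _ _).1 hp).1 ((mcp _ _).1 hq).1 (Prod.mk.inj hpq).1.symm
    rw [e]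
    refine prod_pairs_associated _ _ (fun a b => x a ^ 2 - x b ^ 2) (fun a b => by ring)
      ?_ ?_ ?_ ?_
    · intro p hp hp'
      rcases Finset.mem_union.1 hp with hp | hp <;> rcases Finset.mem_union.1 hp' with hp' | hp' <;>
        obtain ⟨q, hq, rfl⟩ := Finset.mem_image.1 hp <;>
        obtain ⟨r, hr, hqr⟩ := Finset.mem_image.1 hp' <;>
        have hq := (mcp _ _).1 hq <;> have hr := (mcp _ _).1 hr <;>
        simp only [Prod.swap_prod_mk, Prod.mk.injEq] at hqr
      · have h1 := bt.left_inj hr.1 hq.2.1 hqr.1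
        have h2 := bt.left_inj hr.2.1 hq.1 hqr.2
        have := hq.2.2.2; have := hr.2.2.2; rw [h1, h2] at this; omega
      · exact bt.left_ne_right hq.2.1 hr.1 hqr.1.symm
      · exact bt.left_ne_right hr.1 hq.2.1 hqr.1
      · have h1 := bt.right_inj hr.1 hq.2.1 hqr.1
        have h2 := bt.right_inj hr.2.1 hq.1 hqr.2
        have := hq.2.2.2; have := hr.2.2.2; rw [h1, h2] at this; omega
    · rintro ⟨i, j⟩; simp; grind
    · intro p hp
      rcases Finset.mem_union.1 hp with hp | hp <;>
        obtain ⟨q, hq, rfl⟩ := Finset.mem_image.1 hp <;> have hq := (mcp _ _).1 hq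
      · have h1 : bt.left q.1 ≠ bt.left q.2 := fun h => by
          have := hq.2.2.2; rw [bt.left_inj hq.1 hq.2.1 h] at this; omega
        have h2 := (hLL _ hq.1 _ hq.2.1).2 hq.2.2.1
        rcases lt_or_gt_of_ne h1 with h | h
        · left; simp [h, h2]
        · right; simp [h, h2]
      · have h1 : bt.right q.1 ≠ bt.right q.2 := fun h => by
          have := hq.2.2.2; rw [bt.right_inj hq.1 hq.2.1 h] at this; omega
        have h2 := (hRR _ hq.1 _ hq.2.1).2 hq.2.2.1
        rcases lt_or_gt_of_ne h1 with h | h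
        · left; simp [h, h2]
        · right; simp [h, h2]
    · rintro ⟨i, j⟩ hij
      simp only [Finset.mem_filter, Finset.mem_univ, true_and] at hij
      obtain ⟨hij, hχ⟩ := hij
      rcases bt.cover i with ⟨c, hc, rfl⟩ | ⟨c, hc, rfl⟩ <;>
        rcases bt.cover j with ⟨c', hc', rfl⟩ | ⟨c', hc', rfl⟩
      · have h1 := (hLL _ hc _ hc').1 hχ
        have h2 : c.1 ≠ c'.1 := fun h => hij.ne (by rw [Prod.ext h h1])
        rcases lt_or_gt_of_ne h2 with h | h
        · left
          exact Finset.mem_union_left _ (Finset.mem_image.2 ⟨(c, c'), (mcp _ _).2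
            ⟨hc, hc', h1, h⟩, rfl⟩)
        · right
          exact Finset.mem_union_left _ (Finset.mem_image.2 ⟨(c', c), (mcp _ _).2
            ⟨hc', hc, h1.symm, h⟩, rfl⟩)
      · have := hL _ hc; rw [hχ, hR _ hc'] at this; cases this
      · have := hR _ hc; rw [hχ, hL _ hc'] at this; cases this
      · have h1 := (hRR _ hc _ hc').1 hχ
        have h2 : c.1 ≠ c'.1 := fun h => hij.ne (by rw [Prod.ext h h1])
        rcases lt_or_gt_of_ne h2 with h | h
        · left
          exact Finset.mem_union_right _ (Finset.mem_image.2 ⟨(c, c'), (mcp _ _).2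
            ⟨hc, hc', h1, h⟩, rfl⟩)
        · right
          exact Finset.mem_union_right _ (Finset.mem_image.2 ⟨(c', c), (mcp _ _).2
            ⟨hc', hc, h1.symm, h⟩, rfl⟩)
  · rw [← Finset.prod_image (s := cellsF n g) (g := bt.right) (f := x)
      fun a ha b hb hab => bt.right_inj ha hb hab]
    refine Finset.prod_congr ?_ fun _ _ => rfl
    ext i
    simp only [Finset.mem_image, Finset.mem_filter, Finset.mem_univ, true_and]
    constructor
    · rintro ⟨c, hc, rfl⟩; exact hR c hc
    · intro hi
      rcases bt.cover i with ⟨c, hc, rfl⟩ | h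
      · rw [hL c hc] at hi; cases hi
      · exact h

/-- Every bitableau yields a column colouring of the corresponding shape. -/
theorem Bitableau.exists_matches {n : ℕ} {f g : ℕ → ℕ} (hfg : IsBP n f g)
    (bt : Bitableau n f g) : ∃ χ, bt.Matches χ ∧ HasShape χ (interleave f g) := by
  classical
  have mf := mem_cellsF_iff hfg.1 hfg.left_le
  have mg := mem_cellsF_iff hfg.2.1 hfg.right_le
  have hex : ∀ k : Fin n, ∃ κ : Col n,
      (∀ c ∈ cellsF n f, bt.left c = k → κ = (false, Fin.ofNat (n + 1) c.2)) ∧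
      (∀ c ∈ cellsF n g, bt.right c = k → κ = (true, Fin.ofNat (n + 1) c.2)) := by
    intro k
    rcases bt.cover k with ⟨c, hc, rfl⟩ | ⟨c, hc, rfl⟩
    · exact ⟨(false, Fin.ofNat (n + 1) c.2), fun c' hc' h => by rw [bt.left_inj hc' hc h],
        fun c' hc' h => absurd h.symm (bt.left_ne_right hc hc')⟩
    · exact ⟨(true, Fin.ofNat (n + 1) c.2), fun c' hc' h => absurd h (bt.left_ne_right hc' hc),
        fun c' hc' h => by rw [bt.right_inj hc' hc h]⟩
  choose χ hχ using hex
  have hl : ∀ c ∈ cellsF n f, χ (bt.left c) = (false, Fin.ofNat (n + 1) c.2) := fun c hc =>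
    (hχ _).1 c hc rfl
  have hr : ∀ c ∈ cellsF n g, χ (bt.right c) = (true, Fin.ofNat (n + 1) c.2) := fun c hc =>
    (hχ _).2 c hc rfl
  have hof : ∀ a < n, ∀ y : Fin (n + 1), Fin.ofNat (n + 1) a = y ↔ a = y := by
    intro a ha y
    rw [Fin.ext_iff, Fin.val_ofNat, Nat.mod_eq_of_lt (by omega)]
  have lf : ∀ c ∈ cellsF n f, c.2 < n := fun c hc => ((mf c).1 hc).trans_le (hfg.left_le _)
  have lg : ∀ c ∈ cellsF n g, c.2 < n := fun c hc => ((mg c).1 hc).trans_le (hfg.right_le _)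
  have inj : ∀ a b, a < n → b < n → (Fin.ofNat (n + 1) a = Fin.ofNat (n + 1) b ↔ a = b) := by
    intro a b ha hb
    rw [hof a ha, Fin.val_ofNat, Nat.mod_eq_of_lt (by omega)]
  refine ⟨χ, ⟨fun c hc => by rw [hl c hc], fun c hc => by rw [hr c hc],
    fun c hc c' hc' => ?_, fun c hc c' hc' => ?_⟩, ?_⟩
  · rw [hl c hc, hl c' hc', Prod.mk.injEq, inj _ _ (lf c hc) (lf c' hc')]; simp
  · rw [hr c hc, hr c' hc', Prod.mk.injEq, inj _ _ (lg c hc) (lg c' hc')]; simp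
  -- the height of a column, as the number of rows reaching it
  have htL : ∀ y : Fin (n + 1), (colSet χ (false, y)).card =
      ((Finset.range n).filter fun i => (y : ℕ) < f i).card := by
    intro y
    symm
    refine Finset.card_bij (fun i _ => bt.left (i, y)) ?_ ?_ ?_
    · intro i hi
      have hc := (mf (i, (y : ℕ))).2 (Finset.mem_filter.1 hi).2
      simp [colSet, hl _ hc]
    · intro i hi j hj hij
      have hc := (mf (i, (y : ℕ))).2 (Finset.mem_filter.1 hi).2
      have hc' := (mf (j, (y : ℕ))).2 (Finset.mem_filter.1 hj).2
      exact (Prod.mk.inj (bt.left_inj hc hc' hij)).1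
    · intro k hk
      have hk : χ k = (false, y) := (Finset.mem_filter.1 hk).2
      rcases bt.cover k with ⟨c, hc, rfl⟩ | ⟨c, hc, rfl⟩
      · rw [hl c hc, Prod.mk.injEq, hof _ (lf c hc)] at hk
        refine ⟨c.1, ?_, by rw [← hk.2]⟩
        simp only [cellsF, Finset.mem_filter, Finset.mem_product] at hc
        exact Finset.mem_filter.2 ⟨hc.1.1, hk.2 ▸ hc.2⟩
      · rw [hr c hc] at hk; simp at hk
  have htR : ∀ y : Fin (n + 1), (colSet χ (true, y)).card =
      ((Finset.range n).filter fun i => (y : ℕ) < g i).card := by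
    intro y
    symm
    refine Finset.card_bij (fun i _ => bt.right (i, y)) ?_ ?_ ?_
    · intro i hi
      have hc := (mg (i, (y : ℕ))).2 (Finset.mem_filter.1 hi).2
      simp [colSet, hr _ hc]
    · intro i hi j hj hij
      have hc := (mg (i, (y : ℕ))).2 (Finset.mem_filter.1 hi).2
      have hc' := (mg (j, (y : ℕ))).2 (Finset.mem_filter.1 hj).2
      exact (Prod.mk.inj (bt.right_inj hc hc' hij)).1
    · intro k hk
      have hk : χ k = (true, y) := (Finset.mem_filter.1 hk).2
      rcases bt.cover k with ⟨c, hc, rfl⟩ | ⟨c, hc, rfl⟩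
      · rw [hl c hc] at hk; simp at hk
      · rw [hr c hc, Prod.mk.injEq, hof _ (lg c hc)] at hk
        refine ⟨c.1, ?_, by rw [← hk.2]⟩
        simp only [cellsF, Finset.mem_filter, Finset.mem_product] at hc
        exact Finset.mem_filter.2 ⟨hc.1.1, hk.2 ▸ hc.2⟩
  -- conjugation: row `i` reaches column `y` iff column `y` is higher than `i`
  have conj : ∀ u : ℕ → ℕ, IsPartitionFun n u → ∀ i y : ℕ,
      i < ((Finset.range n).filter fun i => y < u i).card ↔ y < u i := by
    intro u hu i y
    constructor
    · intro h
      by_contra hy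
      have : (Finset.range n).filter (fun i => y < u i) ⊆ Finset.range i := by
        intro j hj
        rw [Finset.mem_filter] at hj
        rw [Finset.mem_range]
        by_contra hij
        have := hu.1 (not_lt.1 hij)
        omega
      have := Finset.card_le_card this
      rw [Finset.card_range] at this
      omega
    · intro h
      have : Finset.range (i + 1) ⊆ (Finset.range n).filter (fun i => y < u i) := by
        intro j hj
        rw [Finset.mem_range] at hj
        have h1 := hu.1 (show j ≤ i by omega)
        rw [Finset.mem_filter, Finset.mem_range]
        refine ⟨?_, by omega⟩
        by_contra hjn
        rw [hu.2 j (by omega)] at h1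
        omega
      have := Finset.card_le_card this
      rw [Finset.card_range] at this
      omega
  have cnt : ∀ (b : Bool) (m : ℕ), m ≤ n →
      (Finset.univ.filter fun κ : Col n => κ.1 = b ∧ (κ.2 : ℕ) < m).card = m := by
    intro b m hm
    have : (Finset.univ.filter fun κ : Col n => κ.1 = b ∧ (κ.2 : ℕ) < m) =
        (Finset.range m).image fun i => ((b, Fin.ofNat (n + 1) i) : Col n) := by
      ext ⟨s, y⟩
      simp only [Finset.mem_filter, Finset.mem_univ, true_and, Finset.mem_image,
        Finset.mem_range, Prod.mk.injEq]
      constructor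
      · rintro ⟨rfl, h⟩
        exact ⟨y, h, rfl, (hof _ (by omega) _).2 rfl⟩
      · rintro ⟨i, hi, rfl, h⟩
        exact ⟨rfl, by rw [← (hof i (by omega) y).1 h]; exact hi⟩
    rw [this, Finset.card_image_of_injOn, Finset.card_range]
    intro a ha b hb hab
    simp only [Finset.coe_range, Set.mem_Iio] at ha hb
    exact (inj a b (by omega) (by omega)).1 (Prod.mk.inj hab).2
  intro j
  by_cases hj : j % 2 = 0
  · rw [interleave, if_pos hj, ← cnt false _ (hfg.left_le (j / 2))]
    congr 1
    ext ⟨s, y⟩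
    have : side j = false := by simp [side, hj]
    simp only [Finset.mem_filter, Finset.mem_univ, true_and, this]
    refine and_congr_right ?_
    rintro rfl
    rw [htL, conj f hfg.1]
  · rw [interleave, if_neg hj, ← cnt true _ (hfg.right_le (j / 2))]
    congr 1
    ext ⟨s, y⟩
    have : side j = true := by simp [side]; omega
    simp only [Finset.mem_filter, Finset.mem_univ, true_and, this]
    refine and_congr_right ?_
    rintro rfl
    rw [htR, conj g hfg.2.1]

/-- In a suitable (weakly decreasing) order, the heights of the columns form the conjugate of the
partition whose `i`-th part is the number of columns higher than `i`. -/
theorem exists_sorting {N : ℕ} (h : Fin N → ℕ) : ∃ π : Equiv.Perm (Fin N), ∀ (y : Fin N) (i : ℕ),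
    (y : ℕ) < (Finset.univ.filter fun z => i < h z).card ↔ i < h (π y) := by
  refine ⟨Tuple.sort (OrderDual.toDual ∘ h), fun y i => ?_⟩
  set π := Tuple.sort (OrderDual.toDual ∘ h) with hπ
  have anti : ∀ a b, a ≤ b → h (π b) ≤ h (π a) := fun a b hab =>
    Tuple.monotone_sort (OrderDual.toDual ∘ h) hab
  have hcard : (Finset.univ.filter fun z => i < h z).card =
      (Finset.univ.filter fun z => i < h (π z)).card := by
    symm
    refine Finset.card_bij (fun z _ => π z) (by simp) (by simp) fun z hz => ⟨π.symm z, ?_, by simp⟩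
    simpa using hz
  rw [hcard]
  constructor
  · intro hy
    by_contra hc
    have : (Finset.univ.filter fun z => i < h (π z)) ⊆ Finset.Iio y := by
      intro z hz
      rw [Finset.mem_Iio]
      by_contra hzy
      have h1 := anti y z (not_lt.1 hzy)
      have h2 := (Finset.mem_filter.1 hz).2
      omega
    have := Finset.card_le_card this
    rw [Fin.card_Iio] at this
    omega
  · intro hy
    have : Finset.Iic y ⊆ (Finset.univ.filter fun z => i < h (π z)) := by
      intro z hz
      have h1 := anti z y (Finset.mem_Iic.1 hz)
      exact Finset.mem_filter.2 ⟨Finset.mem_univ _, by omega⟩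
    have := Finset.card_le_card this
    rw [Fin.card_Iic] at this
    omega

/-- One of the two tableaux recovered from a column colouring. -/
theorem exists_filling {n : ℕ} [NeZero n] {u : ℕ → ℕ} (hu : IsPartitionFun n u)
    (hun : ∀ i, u i ≤ n) (χ : Fin n → Col n) (b : Bool)
    (h : ∀ i, (Finset.univ.filter fun κ : Col n => κ.1 = b ∧ i < (colSet χ κ).card).card = u i) :
    ∃ fill : ℕ × ℕ → Fin n, (∀ c ∈ cellsF n u, (χ (fill c)).1 = b) ∧
      (∀ c ∈ cellsF n u, ∀ c' ∈ cellsF n u, χ (fill c) = χ (fill c') ↔ c.2 = c'.2) ∧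
      ∀ k, (χ k).1 = b → ∃! c, c ∈ cellsF n u ∧ fill c = k := by
  classical
  obtain ⟨π, hπ⟩ := exists_sorting fun y : Fin (n + 1) => (colSet χ (b, y)).card
  have hcol : ∀ (y : Fin (n + 1)) (i : ℕ), (y : ℕ) < u i ↔ i < (colSet χ (b, π y)).card := by
    intro y i
    rw [← hπ y i, ← h i]
    have : (Finset.univ.filter fun κ : Col n => κ.1 = b ∧ i < (colSet χ κ).card).card =
        (Finset.univ.filter fun z : Fin (n + 1) => i < (colSet χ (b, z)).card).card := by
      symm
      refine Finset.card_bij (fun z _ => (b, z)) (by simp) (by simp) ?_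
      rintro ⟨b', z⟩ hz
      simp only [Finset.mem_filter, Finset.mem_univ, true_and] at hz
      obtain ⟨rfl, hz⟩ := hz
      exact ⟨z, by simpa using hz, rfl⟩
    rw [this]
  have hen : ∀ y : Fin (n + 1), ∃ en : ℕ → Fin n,
      (∀ i < (colSet χ (b, y)).card, χ (en i) = (b, y)) ∧
      ∀ k, χ k = (b, y) → ∃! i, i < (colSet χ (b, y)).card ∧ en i = k := by
    intro y
    set A := colSet χ (b, y) with hA
    have memA : ∀ k, k ∈ A ↔ χ k = (b, y) := by simp [hA, colSet]
    let e := A.equivFin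
    refine ⟨fun i => if hi : i < A.card then (e.symm ⟨i, hi⟩ : Fin n) else 0, ?_, ?_⟩
    · intro i hi
      simp only [hi, dif_pos]
      exact (memA _).1 (e.symm ⟨i, hi⟩).2
    · intro k hk
      refine ⟨e ⟨k, (memA k).2 hk⟩, ⟨Fin.is_lt _, by simp⟩, ?_⟩
      rintro i ⟨hi, hik⟩
      simp only [hi, dif_pos] at hik
      have : e.symm ⟨i, hi⟩ = ⟨k, (memA k).2 hk⟩ := Subtype.ext hik
      rw [← this]; simp
  choose en hen1 hen2 using hen
  have mu := mem_cellsF_iff hu hun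
  have hof : ∀ a < n + 1, ((Fin.ofNat (n + 1) a : Fin (n + 1)) : ℕ) = a := by
    intro a ha
    rw [Fin.val_ofNat, Nat.mod_eq_of_lt ha]
  have hlt : ∀ c ∈ cellsF n u, c.2 < n + 1 := fun c hc => by
    have := (mu c).1 hc; have := hun c.1; omega
  have hrow : ∀ c ∈ cellsF n u, c.1 < (colSet χ (b, π (Fin.ofNat (n + 1) c.2))).card := by
    intro c hc
    rw [← hcol, hof _ (hlt c hc)]
    exact (mu c).1 hc
  have hχ : ∀ c ∈ cellsF n u, χ (en (π (Fin.ofNat (n + 1) c.2)) c.1) =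
      (b, π (Fin.ofNat (n + 1) c.2)) := fun c hc => hen1 _ _ (hrow c hc)
  refine ⟨fun c => en (π (Fin.ofNat (n + 1) c.2)) c.1, fun c hc => by rw [hχ c hc],
    fun c hc c' hc' => ?_, fun k hk => ?_⟩
  · simp only [hχ c hc, hχ c' hc', Prod.mk.injEq, true_and, EmbeddingLike.apply_eq_iff_eq]
    rw [Fin.ext_iff, hof _ (hlt c hc), hof _ (hlt c' hc')]
  · obtain ⟨y, hy⟩ : ∃ y, χ k = (b, π y) := ⟨π.symm (χ k).2, by simp [← hk]⟩
    obtain ⟨i, ⟨hi, hik⟩, huniq⟩ := hen2 _ k hy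
    have hyof : Fin.ofNat (n + 1) (y : ℕ) = y := Fin.ext (hof _ y.2)
    refine ⟨(i, (y : ℕ)), ⟨(mu _).2 ((hcol y i).2 hi), ?_⟩, ?_⟩
    · simp only [hyof]; exact hik
    · rintro ⟨i', y'⟩ ⟨hc, hk'⟩
      have h1 := hχ _ hc
      simp only at hk' h1
      rw [hk', hy, Prod.mk.injEq] at h1
      have h2 : y = Fin.ofNat (n + 1) y' := π.injective h1.2
      have h3 : (y : ℕ) = y' := by rw [h2, hof _ (hlt _ hc)]
      have h4 := hrow _ hc
      simp only [← h2] at h4 hk'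
      rw [huniq i' ⟨h4, hk'⟩, h3]

/-- Every column colouring of a given shape comes from a bitableau. -/
theorem exists_bitableau_of_hasShape {n : ℕ} [NeZero n] {f g : ℕ → ℕ} (hfg : IsBP n f g)
    (χ : Fin n → Col n) (hχ : HasShape χ (interleave f g)) :
    ∃ bt : Bitableau n f g, bt.Matches χ := by
  obtain ⟨l, hl1, hl2, hl3⟩ := exists_filling hfg.1 hfg.left_le χ false fun i => by
    have := hχ (2 * i)
    simpa [side, interleave] using this
  obtain ⟨r, hr1, hr2, hr3⟩ := exists_filling hfg.2.1 hfg.right_le χ true fun i => by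
    have := hχ (2 * i + 1)
    have e1 : (2 * i + 1) / 2 = i := by omega
    have e2 : (2 * i + 1) % 2 = 1 := by omega
    simpa [side, interleave, e1, e2] using this
  refine ⟨⟨l, r, fun k => ?_⟩, hl1, hr1, hl2, hr2⟩
  cases hk : (χ k).1
  · obtain ⟨c, hc, huniq⟩ := hl3 k hk
    refine ⟨Sum.inl c, hc, ?_⟩
    rintro (c' | c') hc'
    · exact congrArg Sum.inl (huniq c' hc')
    · obtain ⟨hc', rfl⟩ := hc'
      rw [hr1 c' hc'] at hk; cases hk
  · obtain ⟨c, hc, huniq⟩ := hr3 k hk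
    refine ⟨Sum.inr c, hc, ?_⟩
    rintro (c' | c') hc'
    · obtain ⟨hc', rfl⟩ := hc'
      rw [hl1 c' hc'] at hk; cases hk
    · exact congrArg Sum.inr (huniq c' hc')

/-! ### Dominance implies inclusion of ideals -/

theorem sum_interleave_of_isBP {n : ℕ} {f g : ℕ → ℕ} (hfg : IsBP n f g) {m : ℕ}
    (hm : 2 * n ≤ m) : ∑ j ∈ Finset.range m, interleave f g j = n := by
  rw [← Finset.sum_subset (Finset.range_mono hm), sum_interleave, hfg.2.2]
  intro j _ hj
  rw [Finset.mem_range, not_lt] at hj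
  unfold interleave
  split_ifs
  · exact hfg.1.2 _ (by omega)
  · exact hfg.2.1.2 _ (by omega)

theorem spechtIdeal_le_of_bidom {K : Type*} [Field K] [CharZero K] {n : ℕ}
    {p q : Bipartition n} (h : Bidom q p) :
    spechtIdeal n K q.l q.m ≤ spechtIdeal n K p.l p.m := by
  refine Ideal.span_le.2 ?_
  rintro _ ⟨bt, rfl⟩
  rcases Nat.eq_zero_or_pos n with rfl | hn
  · exact (bt.left (0, 0)).elim0
  have : NeZero n := ⟨hn.ne'⟩
  obtain ⟨χ, hbt, hχ⟩ := bt.exists_matches q.isBP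
  have hassoc := hbt.associated (fun i => (MvPolynomial.X i : MvPolynomial (Fin n) K))
  refine Ideal.mem_of_dvd _ (hassoc.symm.dvd : colPoly _ χ ∣ speB n K bt) ?_
  refine colPoly_mem_of_dominated _ ?_ _ (interleave p.l p.m) ?_ ?_ ?_ χ _ hχ
    ((bidomFun_iff _ _ _ _).1 h) ?_
  · intro N hN
    have : IsUnit ((N : K)) := (Nat.cast_ne_zero.2 hN).isUnit
    simpa using this.map (MvPolynomial.C (σ := Fin n))
  · intro j
    unfold interleave
    have e1 : (j + 2) % 2 = j % 2 := by omega
    rw [e1]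
    split_ifs
    · exact p.isBP.1.1 (by omega)
    · exact p.isBP.2.1.1 (by omega)
  · intro j
    unfold interleave
    split_ifs
    · exact p.isBP.left_le _
    · exact p.isBP.right_le _
  · intro χ' hχ'
    obtain ⟨bt', hbt'⟩ := exists_bitableau_of_hasShape p.isBP χ' hχ'
    exact Ideal.mem_of_dvd _ ((hbt'.associated _).dvd : speB n K bt' ∣ colPoly _ χ')
      (Ideal.subset_span ⟨bt', rfl⟩)
  · intro m hm
    rw [sum_interleave_of_isBP q.isBP hm, sum_interleave_of_isBP p.isBP hm]

/-! ### Inclusion of varieties implies dominance -/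

theorem card_cellsF_rows {n : ℕ} {f : ℕ → ℕ} (hf : IsPartitionFun n f) (hn : ∀ i, f i ≤ n)
    (k : ℕ) : ((cellsF n f).filter fun c => c.1 < k).card = ∑ i ∈ Finset.range k, f i := by
  have : ∑ i ∈ Finset.range k, f i =
      ((Finset.range k).sigma fun i => Finset.range (f i)).card := by simp
  rw [this]
  refine Finset.card_bij (fun c _ => ⟨c.1, c.2⟩) ?_ ?_ ?_
  · intro c hc
    rw [Finset.mem_filter, mem_cellsF_iff hf hn] at hc
    simp [hc.1, hc.2]
  · rintro ⟨a, b⟩ _ ⟨c, d⟩ _ h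
    simp at h
    simp [h]
  · rintro ⟨a, b⟩ h
    simp at h
    exact ⟨(a, b), by rw [Finset.mem_filter, mem_cellsF_iff hf hn]; exact ⟨h.2, h.1⟩, rfl⟩

theorem exists_bitableau {n : ℕ} [NeZero n] {f g : ℕ → ℕ} (hfg : IsBP n f g) :
    Nonempty (Bitableau n f g) := by
  classical
  have card : ∀ u : ℕ → ℕ, IsPartitionFun n u → (∀ i, u i ≤ n) →
      (cellsF n u).card = ∑ i ∈ Finset.range n, u i := by
    intro u hu hun
    rw [← card_cellsF_rows hu hun, Finset.filter_true_of_mem]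
    intro c hc
    simp only [cellsF, Finset.mem_filter, Finset.mem_product, Finset.mem_range] at hc
    exact hc.1.1
  have hc : Fintype.card (cellsF n f ⊕ cellsF n g) = Fintype.card (Fin n) := by
    rw [Fintype.card_sum, Fintype.card_coe, Fintype.card_coe, Fintype.card_fin,
      card f hfg.1 hfg.left_le, card g hfg.2.1 hfg.right_le, ← Finset.sum_add_distrib, hfg.2.2]
  let e := Fintype.equivOfCardEq hc
  refine ⟨⟨fun c => if h : c ∈ cellsF n f then e (Sum.inl ⟨c, h⟩) else 0,
    fun c => if h : c ∈ cellsF n g then e (Sum.inr ⟨c, h⟩) else 0, fun k => ?_⟩⟩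
  obtain ⟨s, rfl⟩ := e.surjective k
  rcases s with ⟨c, hc⟩ | ⟨c, hc⟩
  · refine ⟨Sum.inl c, by simp [hc], ?_⟩
    rintro (c' | c') ⟨h1, h2⟩
    · simpa [h1] using h2
    · simp [h1] at h2
  · refine ⟨Sum.inr c, by simp [hc], ?_⟩
    rintro (c' | c') ⟨h1, h2⟩
    · simp [h1] at h2
    · simpa [h1] using h2

theorem eval_speB {K : Type*} [CommRing K] {n : ℕ} {f g : ℕ → ℕ} (bt : Bitableau n f g)
    (z : Fin n → K) : MvPolynomial.eval z (speB n K bt) = bt.poly z := by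
  simp [speB, Bitableau.poly, map_prod]

/-- At a point with natural number coordinates, a Specht polynomial is nonzero iff entries of the
same column get distinct values and no entry of the right tableau gets value zero. -/
theorem Bitableau.poly_natCast_ne_zero {K : Type*} [Field K] [CharZero K] {n : ℕ} {f g : ℕ → ℕ}
    (bt : Bitableau n f g) (w : Fin n → ℕ) : bt.poly (fun k => (w k : K)) ≠ 0 ↔
      (∀ q ∈ colPairs n f, w (bt.left q.1) ≠ w (bt.left q.2)) ∧
      (∀ q ∈ colPairs n g, w (bt.right q.1) ≠ w (bt.right q.2)) ∧
      ∀ c ∈ cellsF n g, w (bt.right c) ≠ 0 := by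
  have sq : ∀ a b : ℕ, (a : K) ^ 2 - (b : K) ^ 2 ≠ 0 ↔ a ≠ b := by
    intro a b
    rw [sub_ne_zero, ← Nat.cast_pow, ← Nat.cast_pow, Ne, Nat.cast_inj,
      Nat.pow_left_inj two_ne_zero]
  simp only [Bitableau.poly, mul_ne_zero_iff, Finset.prod_ne_zero_iff, sq, Nat.cast_ne_zero,
    and_assoc]

theorem Bitableau.card_entries {n : ℕ} {f g : ℕ → ℕ} (bt : Bitableau n f g) (P : Fin n → Prop)
    [DecidablePred P] : (Finset.univ.filter P).card =
      ((cellsF n f).filter fun c => P (bt.left c)).card +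
      ((cellsF n g).filter fun c => P (bt.right c)).card := by
  classical
  have e : Finset.univ.filter P = ((cellsF n f).filter fun c => P (bt.left c)).image bt.left ∪
      ((cellsF n g).filter fun c => P (bt.right c)).image bt.right := by
    ext k
    simp only [Finset.mem_filter, Finset.mem_univ, true_and, Finset.mem_union, Finset.mem_image]
    constructor
    · intro hk
      rcases bt.cover k with ⟨c, hc, rfl⟩ | ⟨c, hc, rfl⟩
      · exact Or.inl ⟨c, ⟨hc, hk⟩, rfl⟩
      · exact Or.inr ⟨c, ⟨hc, hk⟩, rfl⟩
    · rintro (⟨c, ⟨_, hk⟩, rfl⟩ | ⟨c, ⟨_, hk⟩, rfl⟩) <;> exact hk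
  rw [e, Finset.card_union_of_disjoint, Finset.card_image_of_injOn, Finset.card_image_of_injOn]
  · intro a ha b hb hab
    exact bt.right_inj (Finset.mem_filter.1 ha).1 (Finset.mem_filter.1 hb).1 hab
  · intro a ha b hb hab
    exact bt.left_inj (Finset.mem_filter.1 ha).1 (Finset.mem_filter.1 hb).1 hab
  · rw [Finset.disjoint_left]
    intro k hk hk'
    obtain ⟨c, hc, rfl⟩ := Finset.mem_image.1 hk
    obtain ⟨c', hc', h⟩ := Finset.mem_image.1 hk'
    exact bt.left_ne_right (Finset.mem_filter.1 hc).1 (Finset.mem_filter.1 hc').1 h.symm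

/-- If the values in each column are distinct, then at most as many cells have a value in a set of
`v` values as there are cells in the first `v` rows. -/
theorem card_cells_le_of_column_injective {n : ℕ} {f : ℕ → ℕ} (hf : IsPartitionFun n f)
    (hn : ∀ i, f i ≤ n) (w : ℕ × ℕ → ℕ) (hw : ∀ q ∈ colPairs n f, w q.1 ≠ w q.2)
    (A : Finset ℕ) {v : ℕ} (hA : A.card ≤ v) :
    ((cellsF n f).filter fun c => w c ∈ A).card ≤ ∑ i ∈ Finset.range v, f i := by
  classical
  have mf := mem_cellsF_iff hf hn
  have hmaps : ∀ P : ℕ × ℕ → Prop, ∀ [DecidablePred P],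
      ∀ c ∈ (cellsF n f).filter P, c.2 ∈ Finset.range n := by
    intro P _ c hc
    rw [Finset.mem_filter, mf] at hc
    exact Finset.mem_range.2 (hc.1.trans_le (hn _))
  rw [← card_cellsF_rows hf hn, Finset.card_eq_sum_card_fiberwise (hmaps _),
    Finset.card_eq_sum_card_fiberwise (hmaps _)]
  refine Finset.sum_le_sum fun y _ => ?_
  by_cases hlong : v < n ∧ y < f v
  · -- the column reaches below the first `v` rows
    refine le_trans (le_trans ?_ hA) ?_
    · refine Finset.card_le_card_of_injOn w ?_ ?_
      · intro c hc
        simp only [Finset.coe_filter, Finset.mem_filter, Set.mem_ofPred_eq] at hc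
        exact hc.1.2
      · intro c hc c' hc' h
        simp only [Finset.coe_filter, Finset.mem_filter, Set.mem_ofPred_eq] at hc hc'
        have hcol : c.2 = c'.2 := hc.2.trans hc'.2.symm
        by_contra hne
        have hrow : c.1 ≠ c'.1 := fun h => hne (Prod.ext h hcol)
        rcases lt_or_gt_of_ne hrow with h1 | h1
        · exact hw (c, c') (by simp [colPairs, hc.1.1, hc'.1.1, hcol, h1]) h
        · exact hw (c', c) (by simp [colPairs, hc.1.1, hc'.1.1, hcol, h1]) h.symm
    · have : (Finset.range v).image (fun i => (i, y)) ⊆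
          ((cellsF n f).filter fun c => c.1 < v).filter fun c => c.2 = y := by
        intro c hc
        obtain ⟨i, hi, rfl⟩ := Finset.mem_image.1 hc
        have hi := Finset.mem_range.1 hi
        have := hf.1 hi.le
        simp only [Finset.mem_filter, mf]
        exact ⟨⟨by omega, hi⟩, trivial⟩
      refine le_trans (le_of_eq ?_) (Finset.card_le_card this)
      rw [Finset.card_image_of_injective _ (Prod.mk_left_injective y), Finset.card_range]
  · refine Finset.card_le_card ?_
    intro c hc
    simp only [Finset.mem_filter] at hc ⊢
    refine ⟨⟨hc.1.1, ?_⟩, hc.2⟩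
    by_contra hv
    have h1 := hf.1 (not_lt.1 hv)
    have h2 := (mf c).1 hc.1.1
    refine hlong ⟨?_, by omega⟩
    by_contra hvn
    have := hf.2 c.1 (by omega)
    omega

theorem sum_interleave_halves (f g : ℕ → ℕ) (m : ℕ) :
    ∑ j ∈ Finset.range m, interleave f g j =
      ∑ i ∈ Finset.range ((m + 1) / 2), f i + ∑ i ∈ Finset.range (m / 2), g i := by
  obtain ⟨k, rfl | rfl⟩ := Nat.even_or_odd' m
  · have e1 : (2 * k + 1) / 2 = k := by omega
    have e2 : 2 * k / 2 = k := by omega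
    rw [sum_interleave, e1, e2, Finset.sum_add_distrib]
  · have e1 : (2 * k + 1 + 1) / 2 = k + 1 := by omega
    have e2 : (2 * k + 1) / 2 = k := by omega
    rw [sum_interleave_succ, e1, e2, Finset.sum_add_distrib, Finset.sum_range_succ]
    omega

/-- Values for the entries of `bt`: on the first `a` rows of the left and the first `b` rows of
the right tableau (with `a = b` or `a = b + 1`) the value depends on the row only, is at most `b`,
and vanishes only in row `b` on the left; elsewhere the values are distinct and larger than `b`. -/
theorem Bitableau.exists_values {n : ℕ} {f g : ℕ → ℕ} (bt : Bitableau n f g) {a b : ℕ}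
    (hb : b ≤ a) (ha : a ≤ b + 1) : ∃ w : Fin n → ℕ,
      (∀ c ∈ cellsF n f, w (bt.left c) =
        if c.1 < a then (if c.1 = b then 0 else c.1 + 1) else b + 1 + bt.left c) ∧
      (∀ c ∈ cellsF n g, w (bt.right c) = if c.1 < b then c.1 + 1 else b + 1 + bt.right c) ∧
      (∀ q ∈ colPairs n f, w (bt.left q.1) ≠ w (bt.left q.2)) ∧
      (∀ q ∈ colPairs n g, w (bt.right q.1) ≠ w (bt.right q.2)) ∧
      ∀ c ∈ cellsF n g, w (bt.right c) ≠ 0 := by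
  have hex : ∀ k : Fin n, ∃ v : ℕ,
      (∀ c ∈ cellsF n f, bt.left c = k →
        v = if c.1 < a then (if c.1 = b then 0 else c.1 + 1) else b + 1 + k) ∧
      (∀ c ∈ cellsF n g, bt.right c = k → v = if c.1 < b then c.1 + 1 else b + 1 + k) := by
    intro k
    rcases bt.cover k with ⟨c, hc, rfl⟩ | ⟨c, hc, rfl⟩
    · exact ⟨_, fun c' hc' h => by rw [bt.left_inj hc' hc h],
        fun c' hc' h => absurd h.symm (bt.left_ne_right hc hc')⟩
    · exact ⟨_, fun c' hc' h => absurd h (bt.left_ne_right hc' hc),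
        fun c' hc' h => by rw [bt.right_inj hc' hc h]⟩
  choose w hw using hex
  have hl := fun c hc => (hw _).1 c hc rfl
  have hr := fun c hc => (hw _).2 c hc rfl
  refine ⟨w, hl, hr, ?_, ?_, ?_⟩
  · intro q hq
    simp only [colPairs, Finset.mem_filter, Finset.mem_product] at hq
    have hne : (bt.left q.1 : ℕ) ≠ bt.left q.2 := fun h => by
      have := bt.left_inj hq.1.1 hq.1.2 (Fin.ext h)
      have := hq.2.2; simp_all
    rw [hl _ hq.1.1, hl _ hq.1.2]
    split_ifs <;> omega
  · intro q hq
    simp only [colPairs, Finset.mem_filter, Finset.mem_product] at hq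
    have hne : (bt.right q.1 : ℕ) ≠ bt.right q.2 := fun h => by
      have := bt.right_inj hq.1.1 hq.1.2 (Fin.ext h)
      have := hq.2.2; simp_all
    rw [hr _ hq.1.1, hr _ hq.1.2]
    split_ifs <;> omega
  · intro c hc
    rw [hr c hc]
    split_ifs <;> omega

theorem bidom_of_spechtVariety_subset {K : Type*} [Field K] [CharZero K] {n : ℕ}
    {p q : Bipartition n} (h : spechtVariety n K p.l p.m ⊆ spechtVariety n K q.l q.m) :
    Bidom q p := by
  classical
  rw [Bidom, bidomFun_iff]
  by_contra hcon
  push Not at hcon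
  obtain ⟨m, hm⟩ := hcon
  rcases Nat.eq_zero_or_pos n with rfl | hn
  · refine absurd hm (not_lt.2 (le_of_eq_of_le ?_ (Nat.zero_le _)))
    refine Finset.sum_eq_zero fun j _ => ?_
    unfold interleave
    split_ifs
    · exact q.isBP.1.2 _ (Nat.zero_le _)
    · exact q.isBP.2.1.2 _ (Nat.zero_le _)
  have : NeZero n := ⟨hn.ne'⟩
  rw [sum_interleave_halves, sum_interleave_halves] at hm
  obtain ⟨bt⟩ := exists_bitableau q.isBP
  set a := (m + 1) / 2 with ha
  set b := m / 2 with hb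
  obtain ⟨w, hl, hr, hw⟩ := bt.exists_values (a := a) (b := b) (by omega) (by omega)
  -- the number of small values is a partial sum of the interleaved sequence of `q`
  have hcount : (Finset.univ.filter fun k => w k ≤ b).card =
      ∑ i ∈ Finset.range a, q.l i + ∑ i ∈ Finset.range b, q.m i := by
    rw [bt.card_entries, ← card_cellsF_rows q.isBP.1 q.isBP.left_le,
      ← card_cellsF_rows q.isBP.2.1 q.isBP.right_le]
    congr 2
    · refine Finset.filter_congr fun c hc => ?_
      rw [hl c hc]
      split_ifs <;> omega
    · refine Finset.filter_congr fun c hc => ?_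
      rw [hr c hc]
      split_ifs <;> omega
  have hzero : ∀ k, w k = 0 → b < a := by
    intro k hk
    rcases bt.cover k with ⟨c, hc, rfl⟩ | ⟨c, hc, rfl⟩
    · rw [hl c hc] at hk
      split_ifs at hk <;> omega
    · exact absurd hk (hw.2.2 c hc)
  have hz : (fun k => (w k : K)) ∈ spechtVariety n K p.l p.m := by
    suffices spechtIdeal n K p.l p.m ≤ RingHom.ker (MvPolynomial.eval fun k => (w k : K)) from
      fun P hP => this hP
    refine Ideal.span_le.2 ?_
    rintro _ ⟨bt', rfl⟩
    change MvPolynomial.eval _ _ = 0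
    rw [eval_speB]
    by_contra hne
    obtain ⟨h1, h2, h3⟩ := (bt'.poly_natCast_ne_zero w).1 hne
    refine absurd hm (not_lt.2 ?_)
    rw [← hcount, bt'.card_entries]
    refine add_le_add ?_ ?_
    · refine le_trans (Finset.card_le_card ?_) (card_cells_le_of_column_injective p.isBP.1
        p.isBP.left_le (fun c => w (bt'.left c)) h1
        (if a = b then Finset.Icc 1 b else Finset.range (b + 1)) (v := a) ?_)
      · intro c hc
        rw [Finset.mem_filter] at hc ⊢
        refine ⟨hc.1, ?_⟩
        split_ifs with hab
        · have := hzero (bt'.left c)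
          rw [Finset.mem_Icc]
          omega
        · rw [Finset.mem_range]
          omega
      · split_ifs with hab
        · simp [hab]
        · rw [Finset.card_range]
          omega
    · refine le_trans (Finset.card_le_card ?_) (card_cells_le_of_column_injective p.isBP.2.1
        p.isBP.right_le (fun c => w (bt'.right c)) h2 (Finset.Icc 1 b) (v := b) (by simp))
      intro c hc
      rw [Finset.mem_filter] at hc ⊢
      have := h3 c hc.1
      refine ⟨hc.1, ?_⟩
      rw [Finset.mem_Icc]
      omega
  refine (bt.poly_natCast_ne_zero (K := K) w).2 hw ?_
  rw [← eval_speB]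
  exact h hz _ (Ideal.subset_span ⟨bt, rfl⟩)

theorem spechtVariety_subset_of_le {K : Type*} [Field K] {n : ℕ} {p q : Bipartition n}
    (h : spechtIdeal n K q.l q.m ≤ spechtIdeal n K p.l p.m) :
    spechtVariety n K p.l p.m ⊆ spechtVariety n K q.l q.m :=
  fun _ hz P hP => hz P (h hP)

end SpechtBn

open SpechtBn in
/-- Theorem 5: equivalence of bidominance, Specht-ideal inclusion and
Specht-variety inclusion. -/
theorem specht_poset_equivalence {K : Type*} [Field K] [CharZero K] {n : ℕ}
    (p q : Bipartition n) :
    (Bidom q p ↔ spechtIdeal n K q.l q.m ≤ spechtIdeal n K p.l p.m) ∧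
    (Bidom q p ↔ spechtVariety n K p.l p.m ⊆ spechtVariety n K q.l q.m) := by
  exact
    ⟨⟨spechtIdeal_le_of_bidom, fun h => bidom_of_spechtVariety_subset (spechtVariety_subset_of_le h)⟩,
      fun h => spechtVariety_subset_of_le (spechtIdeal_le_of_bidom h),
      bidom_of_spechtVariety_subset⟩
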